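/- arXiv:1511.02737 — 6 statements merged into one kernel-verified Lean document; each statement's English description precedes it below -/
import Mathlib

section
/- Let Γ and H be groups with H finite, let p : Γ → H be a surjective group homomorphism, and let G denote the kernel of p. Then there exists an injective group homomorphism δ : Γ → G ≀ H such that the composite of δ with the canonical projection G ≀ H → H equals p. -/
/-- Right-translation automorphism of the base group `H → G` of the wreath product. -/
def wreathPerm {G H : Type*} [Group G] [Group H] (h : H) : (H → G) ≃* (H → G) where
  toFun f := fun k => f (k * h)
  invFun f := fun k => f (k * h⁻¹)
  left_inv f := by funext k; simp [mul_assoc]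
  right_inv f := by funext k; simp [mul_assoc]
  map_mul' f g := rfl

/-- The action of `H` on `H → G` by right translation: `(h • f) k = f (k * h)`. -/
def wreathAction (G H : Type*) [Group G] [Group H] : H →* MulAut (H → G) where
  toFun := wreathPerm
  map_one' := by ext f k; simp [wreathPerm]
  map_mul' a b := by ext f k; simp [wreathPerm, mul_assoc]

/-- The wreath product `G ≀ H`, i.e. the semidirect product `(H → G) ⋊ H`. -/
abbrev Wreath (G H : Type*) [Group G] [Group H] := (H → G) ⋊[wreathAction G H] H

/-- For a surjective homomorphism `p : Γ → H` with `H` finite and kernel `G`,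
there is an injective homomorphism `δ : Γ → G ≀ H` such that the canonical projection
`G ≀ H → H` composed with `δ` equals `p`. -/
theorem exists_embedding_into_wreath_of_kernel
    {Γ H : Type*} [Group Γ] [Group H] [Finite H]
    (p : Γ →* H) (hp : Function.Surjective p) :
    ∃ δ : Γ →* Wreath p.ker H,
      Function.Injective δ ∧ SemidirectProduct.rightHom.comp δ = p := by
  choose s hs using hp
  let F : Γ → H → p.ker := fun x k =>
    ⟨s k * x * (s (k * p x))⁻¹, by simp [MonoidHom.mem_ker, hs]⟩
  refine ⟨MonoidHom.mk' (fun x => ⟨F x, p x⟩) ?_, ?_, ?_⟩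
  · intro x y
    apply SemidirectProduct.ext
    · funext k
      apply Subtype.ext
      change s k * (x * y) * (s (k * p (x * y)))⁻¹ =
        (s k * x * (s (k * p x))⁻¹) * (s (k * p x) * y * (s (k * p x * p y))⁻¹)
      rw [map_mul, ← mul_assoc k]
      group
    · exact map_mul p x y
  · intro x y h
    have h1 : F x = F y := congrArg SemidirectProduct.left h
    have h2 : p x = p y := congrArg SemidirectProduct.right h
    have h3 : s 1 * x * (s (1 * p x))⁻¹ = s 1 * y * (s (1 * p y))⁻¹ :=
      congrArg Subtype.val (congrFun h1 1)
    rw [h2] at h3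
    exact mul_left_cancel (mul_right_cancel h3)
  · ext x
    rfl
end

section
/- Let A be a group and let H and S be finite groups. Then there exists an injective group homomorphism from (H → A) ≀ S into A ≀ (H × S), where H → A denotes the group of functions from H to A under pointwise multiplication. -/
/-- For a group `A` and finite groups `H` and `S`, the wreath product
`(H → A) ≀ S` embeds into `A ≀ (H × S)`. -/
theorem wreath_pi_embeds_wreath_prod
    (A : Type*) [Group A] (H S : Type*) [Group H] [Group S] [Finite H] [Finite S] :
    ∃ j : Wreath (H → A) S →* Wreath A (H × S), Function.Injective j := by
  refine ⟨MonoidHom.mk' (fun x => ⟨fun p => x.left p.2 p.1, (1, x.right)⟩) ?_, ?_⟩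
  · intro x y
    apply SemidirectProduct.ext
    · funext p
      change x.left p.2 p.1 * y.left (p.2 * x.right) p.1 =
        x.left p.2 p.1 * y.left (p.2 * x.right) (p.1 * 1)
      rw [mul_one]
    · change ((1 : H), x.right * y.right) = ((1 : H) * 1, x.right * y.right)
      rw [mul_one]
  · intro x y hxy
    have h1 := congrArg SemidirectProduct.left hxy
    have h2 := congrArg SemidirectProduct.right hxy
    apply SemidirectProduct.ext
    · funext s h
      exact congrFun h1 (h, s)
    · exact congrArg Prod.snd h2
end

section
/- Let P be a finite subset of ℂ, let n be a natural number, and let X be the space {f : Fin n → ℂ | f is injective and f(i) ∉ P for all i}, topologized as a subspace of the product space Fin n → ℂ. Then X is aspherical: for every natural number k ≥ 2 and every basepoint x ∈ X, the homotopy group π_k(X, x) is trivial. -/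
namespace KoebeConf

open Set Metric ComplexConjugate unitInterval Topology

/-- The basic norm identity for the degree-two Blaschke product. -/
lemma norm_identity (s w : ℂ) :
    ‖(1 + ‖s‖ ^ 2 : ℝ) - 2 * conj s * w‖ ^ 2 - ‖2 * s - (1 + ‖s‖ ^ 2 : ℝ) * w‖ ^ 2
      = (1 - ‖s‖ ^ 2) ^ 2 * (1 - ‖w‖ ^ 2) := by
  simp only [Complex.sq_norm, Complex.normSq_apply]
  simp
  ring

lemma root_rel (s z h : ℂ) (hh : h ^ 2 = ((conj s) ^ 2 * z - 1) * (z - s ^ 2))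
    (w : ℂ) (hw : w = (s + conj s * z + h) / (1 + ‖s‖ ^ 2 : ℝ)) :
    w * (2 * s - (1 + ‖s‖ ^ 2 : ℝ) * w) = z * ((1 + ‖s‖ ^ 2 : ℝ) - 2 * conj s * w) := by
  have hM : ((1 + ‖s‖ ^ 2 : ℝ) : ℂ) ≠ 0 := by
    exact_mod_cast (by positivity : (1 + ‖s‖ ^ 2 : ℝ) ≠ 0)
  have hM' : ((1 + ‖s‖ ^ 2 : ℝ) : ℂ) = 1 + s * conj s := by
    rw [Complex.mul_conj, Complex.normSq_eq_norm_sq]; push_cast; rfl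
  have hw' : (1 + ‖s‖ ^ 2 : ℝ) * w = s + conj s * z + h := by rw [hw]; field_simp
  have hmul : ((1 + ‖s‖ ^ 2 : ℝ) : ℂ) * (w * (2 * s - (1 + ‖s‖ ^ 2 : ℝ) * w)
      - z * ((1 + ‖s‖ ^ 2 : ℝ) - 2 * conj s * w)) = 0 := by
    rw [hM'] at hw' ⊢
    have e : h = (1 + s * conj s) * w - (s + conj s * z) := by rw [hw']; ring
    rw [e] at hh
    linear_combination (-1 : ℂ) * hh
  have := (mul_eq_zero.1 hmul).resolve_left hM
  exact sub_eq_zero.1 this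

lemma den_ne (s w : ℂ) (hs : ‖s‖ < 1) (hw : ‖w‖ < 1) :
    ((1 + ‖s‖ ^ 2 : ℝ) : ℂ) - 2 * conj s * w ≠ 0 := by
  intro h
  have := norm_identity s w
  rw [h] at this
  have h1 : 0 < (1 - ‖s‖ ^ 2) ^ 2 * (1 - ‖w‖ ^ 2) := by
    have : 0 < 1 - ‖s‖ ^ 2 := by nlinarith [norm_nonneg s]
    have : 0 < 1 - ‖w‖ ^ 2 := by nlinarith [norm_nonneg w]
    positivity
  simp only [norm_zero] at this
  nlinarith [sq_nonneg ‖2 * s - (1 + ‖s‖ ^ 2 : ℝ) * w‖]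

lemma norm_lt_of_rel (s z w : ℂ) (hs : ‖s‖ < 1) (hz : ‖z‖ < 1)
    (h : w * (2 * s - (1 + ‖s‖ ^ 2 : ℝ) * w) = z * ((1 + ‖s‖ ^ 2 : ℝ) - 2 * conj s * w)) :
    ‖w‖ < 1 := by
  by_contra! hw
  have hid := norm_identity s w
  have hn := congrArg norm h
  rw [norm_mul, norm_mul] at hn
  have hs2 : 0 < (1 - ‖s‖ ^ 2) ^ 2 := by
    have : 0 < 1 - ‖s‖ ^ 2 := by nlinarith [norm_nonneg s]
    positivity
  set A := ‖2 * s - (1 + ‖s‖ ^ 2 : ℝ) * w‖ with hA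
  set B := ‖((1 + ‖s‖ ^ 2 : ℝ) : ℂ) - 2 * conj s * w‖ with hB
  have hA0 : 0 ≤ A := norm_nonneg _
  have hB0 : 0 ≤ B := norm_nonneg _
  have hAB : B ≤ A := by
    apply le_of_sq_le_sq _ hA0
    nlinarith [mul_nonneg hs2.le (by nlinarith : 0 ≤ ‖w‖ ^ 2 - 1)]
  rcases hB0.eq_or_lt with hB1 | hB1
  · have hA1 : A = 0 := by
      rw [← hB1] at hn
      have : ‖w‖ ≠ 0 := by linarith
      simpa [this] using hn
    have e1 : ((1 + ‖s‖ ^ 2 : ℝ) : ℂ) * w = 2 * s := by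
      rw [hA1] at hA
      exact (sub_eq_zero.1 (norm_eq_zero.1 hA.symm)).symm
    have e2 := congrArg norm e1
    rw [norm_mul, norm_mul, Complex.norm_real, Real.norm_of_nonneg (by positivity)] at e2
    simp only [Complex.norm_ofNat] at e2
    nlinarith [norm_nonneg s, mul_pos (sub_pos.2 hs) (sub_pos.2 hs)]
  · nlinarith [mul_lt_mul_of_pos_right hz hB1]

lemma contraction (s z w : ℂ) (T : ℝ) (hT : T < 1) (hs : ‖s‖ ^ 2 ≤ T) (hw : ‖w‖ ≤ T)
    (h : w * (2 * s - (1 + ‖s‖ ^ 2 : ℝ) * w) = z * ((1 + ‖s‖ ^ 2 : ℝ) - 2 * conj s * w)) :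
    ‖z‖ ^ 2 ≤ (1 - (1 - T) ^ 2 * (1 - T ^ 2) / 16) * ‖w‖ ^ 2 := by
  have hT0 : 0 ≤ T := (norm_nonneg w).trans hw
  have hs1 : ‖s‖ < 1 := by nlinarith [norm_nonneg s]
  have hw1 : ‖w‖ < 1 := by linarith
  have hid := norm_identity s w
  have hn := congrArg norm h
  have hBpos := norm_pos_iff.2 (den_ne s w hs1 hw1)
  have hB4 : ‖((1 + ‖s‖ ^ 2 : ℝ) : ℂ) - 2 * conj s * w‖ ≤ 4 := by
    refine (norm_sub_le _ _).trans ?_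
    rw [Complex.norm_real, Real.norm_of_nonneg (by positivity), norm_mul, norm_mul]
    simp only [Complex.norm_ofNat, RCLike.norm_conj]
    nlinarith [norm_nonneg s, norm_nonneg w]
  rw [norm_mul, norm_mul] at hn
  set A := ‖2 * s - (1 + ‖s‖ ^ 2 : ℝ) * w‖ with hA
  set B := ‖((1 + ‖s‖ ^ 2 : ℝ) : ℂ) - 2 * conj s * w‖ with hB
  have key : (1 - T) ^ 2 * (1 - T ^ 2) / 16 * B ^ 2 ≤ (1 - ‖s‖ ^ 2) ^ 2 * (1 - ‖w‖ ^ 2) := by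
    have h1 : (1 - T) ^ 2 ≤ (1 - ‖s‖ ^ 2) ^ 2 := by gcongr
    have h2 : 1 - T ^ 2 ≤ 1 - ‖w‖ ^ 2 := by gcongr
    have h3 : 0 ≤ 1 - T ^ 2 := by nlinarith
    have h4 : (1 - T) ^ 2 * (1 - T ^ 2) ≤ (1 - ‖s‖ ^ 2) ^ 2 * (1 - ‖w‖ ^ 2) := by gcongr
    have h5 : B ^ 2 ≤ 16 := by nlinarith
    have h6 : 0 ≤ (1 - T) ^ 2 * (1 - T ^ 2) := by positivity
    nlinarith
  have hsq : ‖z‖ ^ 2 * B ^ 2 = ‖w‖ ^ 2 * A ^ 2 := by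
    rw [← mul_pow, ← mul_pow, hn]
  have hB2 : 0 < B ^ 2 := by positivity
  refine le_of_mul_le_mul_right ?_ hB2
  rw [hsq]
  nlinarith [sq_nonneg ‖w‖]

/-- Möbius identity. -/
lemma mobius_identity (u v : ℂ) :
    ‖1 - conj v * u‖ ^ 2 - ‖u - v‖ ^ 2 = (1 - ‖u‖ ^ 2) * (1 - ‖v‖ ^ 2) := by
  simp only [Complex.sq_norm, Complex.normSq_apply]
  simp
  ring

/-- Harnack-type consequence of the Schwarz–Pick lemma. -/
lemma schwarz_pick {g : ℂ → ℂ} {c z : ℂ} {ρ : ℝ} (hd : DifferentiableOn ℂ g (ball c ρ))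
    (hm : ∀ u ∈ ball c ρ, ‖g u‖ < 1) (hρ : 0 < ρ) (hz : dist z c ≤ ρ / 2) :
    3 / 16 * (1 - ‖g c‖) ≤ 1 - ‖g z‖ := by
  have hcb : c ∈ ball c ρ := mem_ball_self hρ
  have hzb : z ∈ ball c ρ := by rw [mem_ball]; linarith
  have hden : ∀ u ∈ ball c ρ, 1 - conj (g c) * g u ≠ 0 := by
    intro u hu h
    have := congrArg norm (sub_eq_zero.1 h)
    rw [norm_mul, RCLike.norm_conj, norm_one] at this
    nlinarith [hm u hu, hm c hcb, norm_nonneg (g u), norm_nonneg (g c)]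
  let G : ℂ → ℂ := fun u => (g u - g c) / (1 - conj (g c) * g u)
  have hGd : DifferentiableOn ℂ G (ball c ρ) := by
    apply DifferentiableOn.fun_div
    · exact hd.sub_const _
    · exact (hd.const_mul _).const_sub _
    · exact hden
  have hGc : G c = 0 := by simp [G]
  have hGm : MapsTo G (ball c ρ) (closedBall (G c) 1) := by
    intro u hu
    rw [hGc, mem_closedBall_zero_iff]
    simp only [G, norm_div]
    apply div_le_one_of_le₀ _ (norm_nonneg _)
    apply le_of_sq_le_sq _ (norm_nonneg _)
    have := mobius_identity (g u) (g c)
    have h1 : 0 ≤ 1 - ‖g u‖ ^ 2 := by nlinarith [hm u hu, norm_nonneg (g u)]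
    have h2 : 0 ≤ 1 - ‖g c‖ ^ 2 := by nlinarith [hm c hcb, norm_nonneg (g c)]
    nlinarith [mul_nonneg h1 h2]
  have hS := Complex.dist_le_div_mul_dist_of_mapsTo_ball hGd hGm hzb
  rw [hGc, dist_zero_right] at hS
  have hS2 : ‖G z‖ ≤ 1 / 2 := by
    refine hS.trans ?_
    rw [div_mul_eq_mul_div, div_le_iff₀ hρ]; linarith
  simp only [G, norm_div] at hS2
  have hB := norm_pos_iff.2 (hden z hzb)
  rw [div_le_iff₀ hB] at hS2
  have hid := mobius_identity (g z) (g c)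
  have hB1 : 1 - ‖g c‖ ≤ ‖1 - conj (g c) * g z‖ := by
    have := norm_sub_norm_le 1 (conj (g c) * g z)
    rw [norm_mul, RCLike.norm_conj, norm_one] at this
    nlinarith [hm z hzb, norm_nonneg (g c)]
  set B := ‖1 - conj (g c) * g z‖
  set A := ‖g z - g c‖
  have hA : A ^ 2 ≤ (1 / 2 * B) ^ 2 := by gcongr
  have a0 := norm_nonneg (g c)
  have b0 := norm_nonneg (g z)
  have a1 := hm c hcb
  have b1 := hm z hzb
  have : 3 / 4 * (1 - ‖g c‖) ^ 2 ≤ (1 - ‖g z‖ ^ 2) * (1 - ‖g c‖ ^ 2) := by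
    have : (1 - ‖g c‖) ^ 2 ≤ B ^ 2 := by gcongr
    nlinarith
  have h4 : (1 - ‖g z‖ ^ 2) * (1 - ‖g c‖ ^ 2) ≤ (2 * (1 - ‖g z‖)) * (2 * (1 - ‖g c‖)) := by
    have p1 : 1 - ‖g z‖ ^ 2 ≤ 2 * (1 - ‖g z‖) := by nlinarith [sq_nonneg (1 - ‖g z‖)]
    have p2 : 1 - ‖g c‖ ^ 2 ≤ 2 * (1 - ‖g c‖) := by nlinarith [sq_nonneg (1 - ‖g c‖)]
    exact mul_le_mul p1 p2 (by nlinarith) (by linarith)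
  have h5 : 0 < 1 - ‖g c‖ := by linarith
  refine le_of_mul_le_mul_right ?_ h5
  nlinarith

/-- A continuous square root of a holomorphic nonvanishing function is holomorphic. -/
lemma differentiableOn_sqrt {U : Set ℂ} (hU : IsOpen U) {D h : ℂ → ℂ}
    (hD : DifferentiableOn ℂ D U) (hc : ContinuousOn h U) (hh : ∀ z ∈ U, h z ^ 2 = D z)
    (hne : ∀ z ∈ U, D z ≠ 0) : DifferentiableOn ℂ h U := by
  intro z hz
  have hUz := hU.mem_nhds hz
  have hDz := (hD.differentiableAt hUz).hasDerivAt
  have hcz := hc.continuousAt hUz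
  have hz0 : h z + h z ≠ 0 := by
    intro h0
    have : h z = 0 := by linear_combination h0 / 2
    apply hne z hz
    rw [← hh z hz, this]; simp
  apply DifferentiableAt.differentiableWithinAt
  have : HasDerivAt h (deriv D z / (h z + h z)) z := by
    rw [hasDerivAt_iff_tendsto_slope] at hDz ⊢
    have hs : Filter.Tendsto (fun w => h w + h z) (𝓝[≠] z) (𝓝 (h z + h z)) :=
      (hcz.add continuousAt_const).tendsto.mono_left nhdsWithin_le_nhds
    refine (hDz.div hs hz0).congr' ?_
    have e1 : ∀ᶠ w in 𝓝[≠] z, h w + h z ≠ 0 := hs.eventually_ne hz0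
    have e2 : ∀ᶠ w in 𝓝[≠] z, w ∈ U := nhdsWithin_le_nhds hUz
    filter_upwards [e1, e2, self_mem_nhdsWithin] with w hw1 hw2 hw3
    have hw3' : w - z ≠ 0 := sub_ne_zero.2 hw3
    simp only [slope_def_field, Pi.div_apply]
    rw [← hh w hw2, ← hh z hz]
    field_simp
    ring
  exact this.differentiableAt

lemma exists_holo_sqrt {c : ℂ} {ρ : ℝ} (hρ : 0 < ρ) {D : ℂ → ℂ}
    (hD : DifferentiableOn ℂ D (ball c ρ)) (hne : ∀ z ∈ ball c ρ, D z ≠ 0) :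
    ∃ h : ℂ → ℂ, DifferentiableOn ℂ h (ball c ρ) ∧ ∀ z, h z ^ 2 = D z := by
  have hsc : IsSimplyConnected (ball c ρ) := by
    have := (convex_ball c ρ).contractibleSpace ⟨c, mem_ball_self hρ⟩
    unfold IsSimplyConnected
    infer_instance
  obtain ⟨h, hc, hh⟩ := Complex.exists_continuousOn_pow_eq hsc isOpen_ball hD.continuousOn
    (by rintro ⟨z, hz, h0⟩; exact hne z hz h0) two_ne_zero
  exact ⟨h, differentiableOn_sqrt isOpen_ball hD hc (fun z _ => hh z) hne, hh⟩

lemma exists_cube_sqrt {k : ℕ} {D : (Fin k → I) → ℂ} (hD : Continuous D) (hne : ∀ y, D y ≠ 0) :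
    ∃ h : (Fin k → I) → ℂ, Continuous h ∧ ∀ y, h y ^ 2 = D y := by
  let pr : (Fin k → ℝ) → (Fin k → I) := fun v i => projIcc 0 1 zero_le_one (v i)
  have hpr : Continuous pr := by
    apply continuous_pi; intro i
    exact continuous_projIcc.comp (continuous_apply i)
  have hsc : IsSimplyConnected (univ : Set (Fin k → ℝ)) := by
    have := (convex_univ (𝕜 := ℝ) (E := Fin k → ℝ)).contractibleSpace univ_nonempty
    unfold IsSimplyConnected
    infer_instance
  obtain ⟨h, hc, hh⟩ := Complex.exists_continuousOn_pow_eq hsc isOpen_univ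
    (hD.comp hpr).continuousOn
    (by rintro ⟨z, hz, h0⟩; exact hne _ h0) two_ne_zero
  rw [continuousOn_univ] at hc
  refine ⟨fun y => h (fun i => (y i : ℝ)), hc.comp (by fun_prop), fun y => ?_⟩
  rw [hh]
  simp [pr]

lemma sqrt_unique {X : Type*} [TopologicalSpace X] {V : Set X} (hV : IsPreconnected V)
    {h g : X → ℂ} (hh : ContinuousOn h V) (hg : ContinuousOn g V)
    (hsq : ∀ x ∈ V, h x ^ 2 = g x ^ 2) (hne : ∀ x ∈ V, g x ≠ 0) :
    (∀ x ∈ V, h x = g x) ∨ (∀ x ∈ V, h x = - g x) := by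
  have := hV.eq_or_eq_neg_of_sq_eq hh hg (fun x hx => hsq x hx) (fun hx => hne _ hx)
  exact this

lemma face_preconnected {k : ℕ} (i : Fin k) (e : I) :
    IsPreconnected {y : Fin k → I | y i = e} := by
  have : {y : Fin k → I | y i = e} = univ.pi (fun j => if j = i then {e} else univ) := by
    ext y
    simp only [mem_ofPred_eq, mem_univ_pi]
    constructor
    · intro h j
      by_cases hj : j = i
      · subst hj; simp [h]
      · simp [hj]
    · intro h; simpa using h i
  rw [this]
  apply isPreconnected_univ_pi
  intro j
  split_ifs
  · exact isPreconnected_singleton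
  · exact isPreconnected_univ

lemma boundary_preconnected {k : ℕ} (hk : 2 ≤ k) : IsPreconnected (Cube.boundary (Fin k)) := by
  have hface : ∀ (i : Fin k) (e : I), (e = 0 ∨ e = 1) →
      {y : Fin k → I | y i = e} ⊆ Cube.boundary (Fin k) := by
    rintro i e he y rfl
    exact ⟨i, he⟩
  have hadj : ∀ (i j : Fin k) (e e' : I), i ≠ j →
      IsPreconnected ({y : Fin k → I | y i = e} ∪ {y : Fin k → I | y j = e'}) := by
    intro i j e e' hij
    refine IsPreconnected.union (fun l => if l = i then e else e') ?_ ?_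
      (face_preconnected i e) (face_preconnected j e')
    · simp
    · simp [hij.symm]
  apply isPreconnected_of_forall_pair
  rintro x ⟨i, hi⟩ y ⟨j, hj⟩
  by_cases hij : i = j
  · subst hij
    obtain ⟨l, hl⟩ : ∃ l : Fin k, l ≠ i := by
      have : Nontrivial (Fin k) := Fin.nontrivial_iff_two_le.2 hk
      exact exists_ne i
    refine ⟨({z : Fin k → I | z i = x i} ∪ {z : Fin k → I | z l = 0}) ∪
      ({z : Fin k → I | z l = 0} ∪ {z : Fin k → I | z i = y i}), ?_, ?_, ?_, ?_⟩
    · exact union_subset (union_subset (hface _ _ hi) (hface _ _ (Or.inl rfl)))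
        (union_subset (hface _ _ (Or.inl rfl)) (hface _ _ hj))
    · left; left; rfl
    · right; right; rfl
    · refine IsPreconnected.union (fun _ => 0) ?_ ?_ (hadj _ _ _ _ hl.symm) (hadj _ _ _ _ hl)
      · right; simp
      · left; simp
  · exact ⟨_, union_subset (hface i _ hi) (hface j _ hj), Or.inl rfl, Or.inr rfl,
      hadj _ _ _ _ hij⟩

lemma cube_ball_preconnected {k : ℕ} (y : Fin k → I) {δ : ℝ} (hδ : 0 < δ) :
    IsPreconnected (ball y δ) := by
  rw [ball_pi y hδ]
  apply isPreconnected_univ_pi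
  intro i
  have : OrdConnected (ball (y i) δ) := by
    constructor
    intro a ha b hb c hc
    simp only [mem_ball, Subtype.dist_eq, Real.dist_eq, abs_lt] at *
    have h1 : (a : ℝ) ≤ c := hc.1
    have h2 : (c : ℝ) ≤ b := hc.2
    constructor <;> linarith
  exact this.isPreconnected

/-- The map `f` on the cube is nullhomotopic rel boundary inside the unit disk minus `Q`. -/
def NullIn {k : ℕ} (Q : Set ℂ) (f : (Fin k → I) → ℂ) : Prop :=
  ∃ H : I × (Fin k → I) → ℂ, Continuous H ∧ (∀ y, H (0, y) = f y) ∧ (∀ y, H (1, y) = 0) ∧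
    (∀ t, ∀ y ∈ Cube.boundary (Fin k), H (t, y) = 0) ∧ ∀ p, ‖H p‖ < 1 ∧ H p ∉ Q

/-- `f` is a lift of `f0`, locally through holomorphic branches into the disk minus `Q`. -/
def Good {k : ℕ} (f0 : (Fin k → I) → ℂ) (ρ δ : ℝ) (Q : Set ℂ) (f : (Fin k → I) → ℂ) : Prop :=
  Continuous f ∧ (∀ y, ‖f y‖ < 1 ∧ f y ∉ Q) ∧ (∀ y ∈ Cube.boundary (Fin k), f y = 0) ∧
    ∀ y, ∃ g : ℂ → ℂ, DifferentiableOn ℂ g (ball (f0 y) ρ) ∧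
      (∀ u ∈ ball (f0 y) ρ, ‖g u‖ < 1 ∧ g u ∉ Q) ∧ ∀ y' ∈ ball y δ, f y' = g (f0 y')

lemma good_bound {k : ℕ} (hk : 2 ≤ k) {f0 : (Fin k → I) → ℂ} {ρ δ : ℝ} (hρ : 0 < ρ)
    (hf0 : ∀ y, ∀ y' ∈ ball y δ, dist (f0 y') (f0 y) ≤ ρ / 2) (N : ℕ) (hN : 1 / (N : ℝ) < δ)
    (hN0 : 0 < N)
    {Q : Set ℂ} {f : (Fin k → I) → ℂ} (hf : Good f0 ρ δ Q f) (y : Fin k → I) :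
    (3 / 16 : ℝ) ^ N ≤ 1 - ‖f y‖ := by
  obtain ⟨-, -, hb, hg⟩ := hf
  have hδ : 0 < δ := lt_of_le_of_lt (by positivity) hN
  let Y : ℕ → (Fin k → I) := fun j i => projIcc 0 1 zero_le_one ((j : ℝ) / N * (y i : ℝ))
  have hNr : (0 : ℝ) < N := by exact_mod_cast hN0
  have key : ∀ j : ℕ, (3 / 16 : ℝ) ^ j ≤ 1 - ‖f (Y j)‖ := by
    intro j
    induction j with
    | zero =>
      have : f (Y 0) = 0 := by
        apply hb
        exact ⟨⟨0, by omega⟩, Or.inl (by simp [Y])⟩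
      simp [this]
    | succ j ih =>
      have hmem : Y (j + 1) ∈ ball (Y j) δ := by
        rw [mem_ball, dist_pi_lt_iff hδ]
        intro i
        refine lt_of_le_of_lt ?_ hN
        have h1 : dist (Y (j + 1) i) (Y j i) ≤
            |((j + 1 : ℕ) : ℝ) / N * (y i : ℝ) - (j : ℝ) / N * (y i : ℝ)| := by
          rw [Subtype.dist_eq, Real.dist_eq]
          exact abs_projIcc_sub_projIcc zero_le_one
        refine h1.trans ?_
        have : ((j + 1 : ℕ) : ℝ) / N * (y i : ℝ) - (j : ℝ) / N * (y i : ℝ) = 1 / N * (y i : ℝ) := by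
          push_cast; ring
        rw [this, abs_of_nonneg (mul_nonneg (by positivity) (y i).2.1)]
        exact mul_le_of_le_one_right (by positivity) (y i).2.2
      obtain ⟨g, hgd, hgm, hge⟩ := hg (Y j)
      have := schwarz_pick hgd (fun u hu => (hgm u hu).1) hρ (hf0 _ _ hmem)
      rw [← hge _ hmem, ← hge _ (mem_ball_self hδ)] at this
      rw [pow_succ']
      linarith
  have hY : Y N = y := by
    funext i
    simp only [Y]
    rw [div_self hNr.ne', one_mul, projIcc_val]
  simpa [hY] using key N

/-- The degree-two Blaschke product with critical value `s ^ 2`. -/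
noncomputable def blas (s w : ℂ) : ℂ :=
  w * (2 * s - (1 + ‖s‖ ^ 2 : ℝ) * w) / ((1 + ‖s‖ ^ 2 : ℝ) - 2 * conj s * w)

lemma blas_norm_lt (s w : ℂ) (hs : ‖s‖ < 1) (hw : ‖w‖ < 1) : ‖blas s w‖ < 1 := by
  have hd := norm_pos_iff.2 (den_ne s w hs hw)
  have hid := norm_identity s w
  unfold blas
  rw [norm_div, norm_mul, div_lt_one hd]
  have h1 : 0 ≤ (1 - ‖s‖ ^ 2) ^ 2 * (1 - ‖w‖ ^ 2) := by
    have : 0 < 1 - ‖w‖ ^ 2 := by nlinarith [norm_nonneg w]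
    positivity
  have h2 : ‖2 * s - (1 + ‖s‖ ^ 2 : ℝ) * w‖ ≤ ‖((1 + ‖s‖ ^ 2 : ℝ) : ℂ) - 2 * conj s * w‖ :=
    le_of_sq_le_sq (by linarith) hd.le
  nlinarith [norm_nonneg w, norm_nonneg (2 * s - (1 + ‖s‖ ^ 2 : ℝ) * w)]

lemma lift_props (s z h w : ℂ) (hs : ‖s‖ < 1) (hz : ‖z‖ < 1)
    (hh : h ^ 2 = ((conj s) ^ 2 * z - 1) * (z - s ^ 2))
    (hw : w = (s + conj s * z + h) / (1 + ‖s‖ ^ 2 : ℝ)) :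
    ‖w‖ < 1 ∧ blas s w = z := by
  have hr := root_rel s z h hh w hw
  have hw1 := norm_lt_of_rel s z w hs hz hr
  refine ⟨hw1, ?_⟩
  unfold blas
  rw [hr, mul_div_cancel_right₀ _ (den_ne s w hs hw1)]

lemma disc_ne (s z : ℂ) (hs : ‖s‖ < 1) (hz : ‖z‖ < 1) (hne : z ≠ s ^ 2) :
    ((conj s) ^ 2 * z - 1) * (z - s ^ 2) ≠ 0 := by
  refine mul_ne_zero ?_ (sub_ne_zero.2 hne)
  intro h
  have := congrArg norm (sub_eq_zero.1 h)
  rw [norm_mul, norm_pow, RCLike.norm_conj, norm_one] at this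
  have h2 : ‖s‖ ^ 2 < 1 := by nlinarith [norm_nonneg s]
  nlinarith [norm_nonneg z, sq_nonneg ‖s‖]

lemma koebe_step {k : ℕ} (hk : 2 ≤ k) {f0 : (Fin k → I) → ℂ} (hc0 : Continuous f0)
    {ρ δ : ℝ} (hρ : 0 < ρ) (hδ : 0 < δ)
    (hf0 : ∀ y, ∀ y' ∈ ball y δ, dist (f0 y') (f0 y) ≤ ρ / 2)
    {Q : Set ℂ} {f : (Fin k → I) → ℂ} (hf : Good f0 ρ δ Q f) (s : ℂ) (hs : ‖s‖ < 1)
    (hsQ : s ^ 2 ∈ Q) :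
    ∃ (Q' : Set ℂ) (f' : (Fin k → I) → ℂ), Good f0 ρ δ Q' f' ∧ (NullIn Q' f' → NullIn Q f) ∧
      ∀ y, f' y * (2 * s - (1 + ‖s‖ ^ 2 : ℝ) * f' y)
        = f y * ((1 + ‖s‖ ^ 2 : ℝ) - 2 * conj s * f' y) := by
  obtain ⟨hfc, hfm, hfb, hfg⟩ := hf
  have hneQ : ∀ z, z ∉ Q → z ≠ s ^ 2 := fun z hz h => hz (h ▸ hsQ)
  let D : ℂ → ℂ := fun z => ((conj s) ^ 2 * z - 1) * (z - s ^ 2)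
  have hDne : ∀ z, ‖z‖ < 1 → z ∉ Q → D z ≠ 0 := fun z h1 h2 => disc_ne s z hs h1 (hneQ z h2)
  have hDd : Differentiable ℂ D := by unfold D; fun_prop
  obtain ⟨h0, h0c, h0s⟩ := exists_cube_sqrt (hDd.continuous.comp hfc)
    (fun y => hDne _ (hfm y).1 (hfm y).2)
  -- normalise the sign on the boundary
  obtain ⟨h, hc, hsq, hb⟩ : ∃ h : (Fin k → I) → ℂ, Continuous h ∧ (∀ y, h y ^ 2 = D (f y)) ∧
      ∀ y ∈ Cube.boundary (Fin k), h y = -s := by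
    have hbs : ∀ y ∈ Cube.boundary (Fin k), h0 y ^ 2 = (-s) ^ 2 := by
      intro y hy
      rw [h0s]; simp [D, hfb y hy]
    have hs0 : ∀ y ∈ Cube.boundary (Fin k), -s ≠ 0 := by
      intro y hy h0
      have h0' : s = 0 := neg_eq_zero.1 h0
      apply hDne (f y) (hfm y).1 (hfm y).2
      simp [D, hfb y hy, h0']
    rcases sqrt_unique (boundary_preconnected hk) h0c.continuousOn
      (continuousOn_const (c := -s)) hbs hs0 with h | h
    · exact ⟨h0, h0c, h0s, h⟩
    · refine ⟨fun y => - h0 y, h0c.neg, fun y => by rw [neg_sq]; exact h0s y, fun y hy => ?_⟩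
      simp [h y hy]
  let Q' : Set ℂ := {w | blas s w ∈ Q}
  let f' : (Fin k → I) → ℂ := fun y => (s + conj s * f y + h y) / (1 + ‖s‖ ^ 2 : ℝ)
  have hM : ((1 + ‖s‖ ^ 2 : ℝ) : ℂ) ≠ 0 := by
    exact_mod_cast (by positivity : (1 + ‖s‖ ^ 2 : ℝ) ≠ 0)
  have hl : ∀ y, ‖f' y‖ < 1 ∧ blas s (f' y) = f y := fun y =>
    lift_props s (f y) (h y) (f' y) hs (hfm y).1 (hsq y) rfl
  refine ⟨Q', f', ⟨?_, ?_, ?_, ?_⟩, ?_, fun y => root_rel s (f y) (h y) (hsq y) _ rfl⟩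
  · unfold f'
    fun_prop
  · intro y
    refine ⟨(hl y).1, ?_⟩
    change blas s (f' y) ∉ Q
    rw [(hl y).2]; exact (hfm y).2
  · intro y hy
    simp [f', hb y hy, hfb y hy]
  · intro y
    obtain ⟨g, hgd, hgm, hge⟩ := hfg y
    obtain ⟨r, hrd, hrs⟩ := exists_holo_sqrt hρ (D := fun u => D (g u))
      (hDd.comp_differentiableOn hgd) (fun z hz => hDne _ (hgm z hz).1 (hgm z hz).2)
    have hfb0 : ∀ y' ∈ ball y δ, f0 y' ∈ ball (f0 y) ρ := by
      intro y' hy'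
      rw [mem_ball]
      have := hf0 y y' hy'
      linarith
    obtain ⟨r, hrd, hrs, hre⟩ : ∃ r : ℂ → ℂ, DifferentiableOn ℂ r (ball (f0 y) ρ) ∧
        (∀ z, r z ^ 2 = D (g z)) ∧ ∀ y' ∈ ball y δ, h y' = r (f0 y') := by
      have := sqrt_unique (cube_ball_preconnected y hδ) hc.continuousOn
        (g := fun y' => r (f0 y')) (hrd.continuousOn.comp hc0.continuousOn hfb0)
        (fun y' hy' => by rw [hsq, hrs, hge _ hy'])
        (fun y' hy' h0 => by
          have h1 := hfb0 y' hy'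
          apply hDne _ (hgm _ h1).1 (hgm _ h1).2
          rw [← hrs, h0]; simp)
      rcases this with h | h
      · exact ⟨r, hrd, hrs, h⟩
      · exact ⟨fun z => - r z, hrd.neg, fun z => by rw [neg_sq, hrs], h⟩
    refine ⟨fun u => (s + conj s * g u + r u) / (1 + ‖s‖ ^ 2 : ℝ), ?_, ?_, ?_⟩
    · exact ((hgd.const_mul _).const_add _ |>.add hrd).div_const _
    · intro u hu
      have := lift_props s (g u) (r u) _ hs (hgm u hu).1 (hrs u) rfl
      refine ⟨this.1, ?_⟩
      change blas s _ ∉ Q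
      rw [this.2]; exact (hgm u hu).2
    · intro y' hy'
      simp only [f']
      rw [hre y' hy', hge y' hy']
  · rintro ⟨H, Hc, H0, H1, Hb, Hm⟩
    refine ⟨fun p => blas s (H p), ?_, ?_, ?_, ?_, ?_⟩
    · unfold blas
      apply Continuous.div
      · fun_prop
      · fun_prop
      · intro p; exact den_ne s _ hs (Hm p).1
    · intro y; beta_reduce; rw [H0]; exact (hl y).2
    · intro y; beta_reduce; rw [H1]; simp [blas]
    · intro t y hy; beta_reduce; rw [Hb t y hy]; simp [blas]
    · intro p; exact ⟨blas_norm_lt s _ hs (Hm p).1, (Hm p).2⟩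

lemma null_of_bound {k : ℕ} {Q : Set ℂ} {f : (Fin k → I) → ℂ} (hc : Continuous f)
    (hb : ∀ y ∈ Cube.boundary (Fin k), f y = 0) (T : ℝ) (hT : T < 1) (hf : ∀ y, ‖f y‖ ≤ T)
    (hQ : ∀ q ∈ Q, T < ‖q‖) : NullIn Q f := by
  have hn : ∀ p : I × (Fin k → I), ‖((1 - (p.1 : ℝ) : ℝ) : ℂ) * f p.2‖ ≤ T := by
    intro p
    rw [norm_mul, Complex.norm_real, Real.norm_of_nonneg (by linarith [p.1.2.2])]
    have := p.1.2.1
    nlinarith [hf p.2, norm_nonneg (f p.2)]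
  refine ⟨fun p => ((1 - (p.1 : ℝ) : ℝ) : ℂ) * f p.2, by fun_prop, by simp, by simp, ?_, ?_⟩
  · intro t y hy; simp [hb y hy]
  · intro p
    refine ⟨(hn p).trans_lt hT, fun h => ?_⟩
    exact absurd (hQ _ h) (not_lt.2 (hn p))

lemma koebe_iterate {k : ℕ} (hk : 2 ≤ k) {f0 : (Fin k → I) → ℂ} (hc0 : Continuous f0)
    {ρ δ : ℝ} (hρ : 0 < ρ) (hδ : 0 < δ)
    (hf0 : ∀ y, ∀ y' ∈ ball y δ, dist (f0 y') (f0 y) ≤ ρ / 2)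
    (T : ℝ) (hT0 : 0 ≤ T) (hT : T < 1)
    (hTb : ∀ (Q : Set ℂ) (f : (Fin k → I) → ℂ), Good f0 ρ δ Q f → ∀ y, ‖f y‖ ≤ T) (n : ℕ) :
    ∀ (Q : Set ℂ) (f : (Fin k → I) → ℂ), Good f0 ρ δ Q f →
      (∃ y, (1 - (1 - T) ^ 2 * (1 - T ^ 2) / 16) ^ n < ‖f y‖ ^ 2) → NullIn Q f := by
  induction n with
  | zero =>
    rintro Q f hf ⟨y, hy⟩
    have := (hf.2.1 y).1
    rw [pow_zero] at hy
    nlinarith [norm_nonneg (f y)]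
  | succ n ih =>
    rintro Q f hf ⟨y, hy⟩
    by_cases hQ : ∀ q ∈ Q, T < ‖q‖
    · exact null_of_bound hf.1 hf.2.2.1 T hT (hTb Q f hf) hQ
    · push Not at hQ
      obtain ⟨a, haQ, haT⟩ := hQ
      obtain ⟨s, rfl⟩ := IsAlgClosed.exists_pow_nat_eq a (n := 2) (by norm_num)
      rw [norm_pow] at haT
      have hs : ‖s‖ < 1 := by nlinarith [norm_nonneg s]
      obtain ⟨Q', f', hG, hN, hrel⟩ := koebe_step hk hc0 hρ hδ hf0 hf s hs haQ
      apply hN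
      apply ih Q' f' hG
      refine ⟨y, ?_⟩
      have hcon := contraction s (f y) (f' y) T hT haT (hTb Q' f' hG y) (hrel y)
      have hκ : 0 < 1 - (1 - T) ^ 2 * (1 - T ^ 2) / 16 := by
        have : (1 - T) ^ 2 ≤ 1 := by nlinarith
        have h2 : 1 - T ^ 2 ≤ 1 := by nlinarith
        have h3 : 0 ≤ 1 - T ^ 2 := by nlinarith
        have : (1 - T) ^ 2 * (1 - T ^ 2) ≤ 1 := mul_le_one₀ this h3 h2
        linarith
      rw [pow_succ'] at hy
      exact lt_of_mul_lt_mul_left (hy.trans_le hcon) hκ.le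

lemma disk_null {k : ℕ} (hk : 2 ≤ k) {Q : Set ℂ} (hQ : IsClosed Q) {f : (Fin k → I) → ℂ}
    (hc : Continuous f) (hb : ∀ y ∈ Cube.boundary (Fin k), f y = 0)
    (hm : ∀ y, ‖f y‖ < 1 ∧ f y ∉ Q) : NullIn Q f := by
  by_cases hz : ∀ y, f y = 0
  · refine ⟨fun _ => 0, continuous_const, fun y => (hz y).symm, fun _ => rfl, fun _ _ _ => rfl,
      fun p => ?_⟩
    have := hm p.2
    rwa [hz] at this
  push Not at hz
  obtain ⟨y0, hy0⟩ := hz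
  have hcomp : IsCompact (range f) := isCompact_range hc
  have hopen : IsOpen (ball (0 : ℂ) 1 ∩ Qᶜ) := isOpen_ball.inter hQ.isOpen_compl
  have hsub : range f ⊆ ball (0 : ℂ) 1 ∩ Qᶜ := by
    rintro _ ⟨y, rfl⟩
    exact ⟨by simpa using (hm y).1, (hm y).2⟩
  obtain ⟨ρ, hρ, hthick⟩ := hcomp.exists_thickening_subset_open hopen hsub
  have hballs : ∀ y, ∀ u ∈ ball (f y) ρ, ‖u‖ < 1 ∧ u ∉ Q := by
    intro y u hu
    have := hthick (mem_thickening_iff.2 ⟨f y, mem_range_self y, hu⟩)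
    exact ⟨by simpa using this.1, this.2⟩
  obtain ⟨δ, hδ, hunif⟩ := Metric.uniformContinuous_iff.1
    (CompactSpace.uniformContinuous_of_continuous hc) (ρ / 2) (by positivity)
  have hf0 : ∀ y, ∀ y' ∈ ball y δ, dist (f y') (f y) ≤ ρ / 2 :=
    fun y y' hy' => (hunif hy').le
  have hG : Good f ρ δ Q f :=
    ⟨hc, hm, hb, fun y => ⟨id, differentiableOn_id, hballs y, fun _ _ => rfl⟩⟩
  obtain ⟨N, hN⟩ := exists_nat_one_div_lt hδ
  have hTb : ∀ (Q : Set ℂ) (f' : (Fin k → I) → ℂ), Good f ρ δ Q f' →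
      ∀ y, ‖f' y‖ ≤ 1 - (3 / 16 : ℝ) ^ (N + 1) := by
    intro Q f' hf' y
    have := good_bound hk hρ hf0 (N + 1) (by exact_mod_cast hN) (by omega) hf' y
    linarith
  set T : ℝ := 1 - (3 / 16 : ℝ) ^ (N + 1) with hTdef
  have hT1 : T < 1 := by
    have : (0 : ℝ) < (3 / 16 : ℝ) ^ (N + 1) := by positivity
    linarith
  have hT0 : 0 ≤ T := (norm_nonneg _).trans (hTb Q f hG y0)
  have hκ : 1 - (1 - T) ^ 2 * (1 - T ^ 2) / 16 < 1 := by
    have h1 : 0 < 1 - T := by linarith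
    have h2 : 0 < 1 - T ^ 2 := by nlinarith
    have : 0 < (1 - T) ^ 2 * (1 - T ^ 2) := by positivity
    linarith
  have hpos : 0 < ‖f y0‖ ^ 2 := by positivity
  obtain ⟨n, hn⟩ := exists_pow_lt_of_lt_one hpos hκ
  exact koebe_iterate hk hc hρ hδ hf0 T hT0 hT1 hTb n Q f hG ⟨y0, hn⟩

/-- Spherical maps to the plane minus a closed set are nullhomotopic. -/
lemma plane_null {k : ℕ} (hk : 2 ≤ k) {Q : Set ℂ} (hQ : IsClosed Q) {f : (Fin k → I) → ℂ}
    (hc : Continuous f) (c : ℂ) (hb : ∀ y ∈ Cube.boundary (Fin k), f y = c)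
    (hm : ∀ y, f y ∉ Q) :
    ∃ H : I × (Fin k → I) → ℂ, Continuous H ∧ (∀ y, H (0, y) = f y) ∧ (∀ y, H (1, y) = c) ∧
      (∀ t, ∀ y ∈ Cube.boundary (Fin k), H (t, y) = c) ∧ ∀ p, H p ∉ Q := by
  obtain ⟨R, hR⟩ : ∃ R : ℝ, ∀ y, ‖f y - c‖ ≤ R := by
    have := (isCompact_range (hc.sub continuous_const : Continuous fun y => f y - c)).isBounded
    obtain ⟨R, hR⟩ := this.exists_norm_le
    exact ⟨R, fun y => hR _ (mem_range_self y)⟩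
  set S : ℝ := |R| + 1 with hS
  have hSpos : 0 < S := by positivity
  have hSC : (S : ℂ) ≠ 0 := by exact_mod_cast hSpos.ne'
  obtain ⟨H, Hc, H0, H1, Hb, Hm⟩ := disk_null hk (Q := (fun w : ℂ => c + S * w) ⁻¹' Q)
    (hQ.preimage (by fun_prop)) (f := fun y => (f y - c) / S) (by fun_prop)
    (fun y hy => by simp [hb y hy]) (fun y => by
      constructor
      · rw [norm_div, Complex.norm_real, Real.norm_of_nonneg hSpos.le, div_lt_one hSpos]
        have := hR y
        have := le_abs_self R
        linarith
      · simp only [mem_preimage]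
        rw [mul_div_cancel₀ _ hSC]
        simpa using hm y)
  refine ⟨fun p => c + S * H p, by fun_prop, ?_, ?_, ?_, fun p => (Hm p).2⟩
  · intro y; beta_reduce; rw [H0, mul_div_cancel₀ _ hSC]; ring
  · intro y; beta_reduce; rw [H1]; simp
  · intro t y hy; beta_reduce; rw [Hb t y hy]; simp


/-- A piecewise explicit map moving the points of one configuration to another. -/
noncomputable def push {ι : Type*} [Fintype ι] (ε : ℝ) (c c' : ι → ℂ) (z : ℂ) : ℂ :=
  z + ∑ i, ((max 0 (1 - ‖z - c i‖ / ε) : ℝ) : ℂ) * (c' i - c i)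

lemma push_self {ι : Type*} [Fintype ι] (ε : ℝ) (c : ι → ℂ) (z : ℂ) : push ε c c z = z := by
  simp [push]

lemma push_apply {ι : Type*} [Fintype ι] {ε : ℝ} (hε : 0 < ε) (c c' : ι → ℂ)
    (hsep : ∀ i j, i ≠ j → ε ≤ ‖c i - c j‖) (j : ι) : push ε c c' (c j) = c' j := by
  classical
  unfold push
  rw [Finset.sum_eq_single j]
  · simp
  · intro i _ hij
    have h1 : 1 ≤ ‖c j - c i‖ / ε := by
      rw [one_le_div hε]; exact hsep j i hij.symm
    rw [max_eq_left (by linarith)]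
    simp
  · simp

lemma push_injective {ι : Type*} [Fintype ι] {ε η : ℝ} (hε : 0 < ε) (c c' : ι → ℂ)
    (hη : Fintype.card ι * η < ε) (hc : ∀ i, ‖c' i - c i‖ ≤ η) :
    Function.Injective (push ε c c') := by
  intro z z' h
  by_contra hne
  have hpos : 0 < ‖z' - z‖ := norm_pos_iff.2 (sub_ne_zero.2 (Ne.symm hne))
  have h1 : z' - z = ∑ i, (((max 0 (1 - ‖z - c i‖ / ε) : ℝ) : ℂ)
      - ((max 0 (1 - ‖z' - c i‖ / ε) : ℝ) : ℂ)) * (c' i - c i) := by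
    simp only [sub_mul, Finset.sum_sub_distrib]
    unfold push at h
    linear_combination (-1 : ℂ) * h
  have h2 : ‖z' - z‖ ≤ ∑ _i : ι, (‖z' - z‖ / ε * η) := by
    conv_lhs => rw [h1]
    refine norm_sum_le_of_le _ fun i _ => ?_
    rw [norm_mul, ← Complex.ofReal_sub, Complex.norm_real, Real.norm_eq_abs]
    refine mul_le_mul ?_ (hc i) (norm_nonneg _) (by positivity)
    have e1 : |max 0 (1 - ‖z - c i‖ / ε) - max 0 (1 - ‖z' - c i‖ / ε)|
        ≤ |(1 - ‖z - c i‖ / ε) - (1 - ‖z' - c i‖ / ε)| := by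
      have := abs_max_sub_max_le_abs (1 - ‖z - c i‖ / ε) (1 - ‖z' - c i‖ / ε) 0
      rwa [max_comm _ 0, max_comm _ 0] at this
    refine e1.trans ?_
    have e2 : (1 - ‖z - c i‖ / ε) - (1 - ‖z' - c i‖ / ε) = (‖z' - c i‖ - ‖z - c i‖) / ε := by ring
    rw [e2, abs_div, abs_of_pos hε]
    gcongr
    have := abs_norm_sub_norm_le (z' - c i) (z - c i)
    simpa using this
  rw [Finset.sum_const, Finset.card_univ, nsmul_eq_mul] at h2
  have h3 : (Fintype.card ι : ℝ) * (‖z' - z‖ / ε * η) = ‖z' - z‖ * (Fintype.card ι * η / ε) := by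
    ring
  rw [h3] at h2
  have h4 : (Fintype.card ι : ℝ) * η / ε < 1 := by rwa [div_lt_one hε]
  nlinarith

lemma push_continuous {ι X : Type*} [Fintype ι] [TopologicalSpace X] (ε : ℝ)
    {c c' : X → ι → ℂ} {z : X → ℂ} (hc : Continuous c) (hc' : Continuous c') (hz : Continuous z) :
    Continuous fun x => push ε (c x) (c' x) (z x) := by
  unfold push
  fun_prop

/-- Lifting of homotopies of configurations to one more point. -/
lemma exists_extra_point {ι Y : Type*} [Fintype ι] [PseudoMetricSpace Y] [CompactSpace Y]
    [Nonempty Y] (H : I × Y → ι → ℂ) (hH : Continuous H) (hinj : ∀ p, Function.Injective (H p))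
    (g0 : Y → ℂ) (hg0 : Continuous g0) (hne : ∀ y i, g0 y ≠ H (0, y) i) :
    ∃ G : I × Y → ℂ, Continuous G ∧ (∀ p i, G p ≠ H p i) ∧ (∀ y, G (0, y) = g0 y) ∧
      ∀ t y, (∀ t', H (t', y) = H (0, y)) → G (t, y) = g0 y := by
  obtain ⟨ε, hε, hsep⟩ : ∃ ε : ℝ, 0 < ε ∧ ∀ i j, i ≠ j → ∀ p, ε ≤ ‖H p i - H p j‖ := by
    have : ∀ᶠ ε : ℝ in 𝓝[>] 0, 0 < ε ∧ ∀ i j, i ≠ j → ∀ p, ε ≤ ‖H p i - H p j‖ := by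
      refine Filter.Eventually.and self_mem_nhdsWithin ?_
      rw [Filter.eventually_all]; intro i
      rw [Filter.eventually_all]; intro j
      by_cases hij : i = j
      · simp [hij]
      obtain ⟨p0, -, hp0⟩ := isCompact_univ.exists_isMinOn (univ_nonempty (α := I × Y))
        (f := fun p => ‖H p i - H p j‖) (by fun_prop)
      have hpos : 0 < ‖H p0 i - H p0 j‖ := by
        rw [norm_pos_iff, sub_ne_zero]
        exact fun h => hij (hinj p0 h)
      filter_upwards [Ioc_mem_nhdsGT hpos] with ε hε _ p
      exact hε.2.trans (hp0 (mem_univ p))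
    exact this.exists
  set η : ℝ := ε / (Fintype.card ι + 1) with hη
  have hηpos : 0 < η := by positivity
  have hηε : Fintype.card ι * η < ε := by
    have : (Fintype.card ι + 1) * η = ε := by rw [hη]; field_simp
    linarith
  obtain ⟨δ, hδ, hunif⟩ := Metric.uniformContinuous_iff.1
    (CompactSpace.uniformContinuous_of_continuous hH) η hηpos
  obtain ⟨N, hN⟩ := exists_nat_one_div_lt hδ
  let τ : ℕ → I → I := fun j t => ⟨min (t : ℝ) ((j : ℝ) / (N + 1)),
    le_min t.2.1 (by positivity), (min_le_left _ _).trans t.2.2⟩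
  have hτc : ∀ j, Continuous (τ j) := fun j => by unfold τ; fun_prop
  have hτ0 : ∀ t, τ 0 t = 0 := by
    intro t; ext; simp [τ, t.2.1]
  have hτz : ∀ j, τ j 0 = 0 := by
    intro j; ext
    simp only [τ, Icc.coe_zero]
    exact min_eq_left (by positivity)
  have hτd : ∀ j t, dist (τ (j + 1) t) (τ j t) < δ := by
    intro j t
    refine lt_of_le_of_lt ?_ hN
    rw [Subtype.dist_eq, Real.dist_eq]
    simp only [τ]
    refine (abs_min_sub_min_le_max _ _ _ _).trans ?_
    rw [sub_self, abs_zero, max_eq_right (abs_nonneg _)]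
    have : ((j + 1 : ℕ) : ℝ) / (N + 1) - (j : ℝ) / (N + 1) = 1 / (N + 1) := by push_cast; ring
    rw [this, abs_of_nonneg (by positivity)]
  have hτN : ∀ t, τ (N + 1) t = t := by
    intro t; ext
    simp only [τ]
    rw [min_eq_left]
    push_cast
    rw [div_self (by positivity)]
    exact t.2.2
  have key : ∀ j : ℕ, ∃ G : I × Y → ℂ, Continuous G ∧ (∀ p i, G p ≠ H (τ j p.1, p.2) i) ∧
      (∀ y, G (0, y) = g0 y) ∧ ∀ t y, (∀ t', H (t', y) = H (0, y)) → G (t, y) = g0 y := by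
    intro j
    induction j with
    | zero =>
      refine ⟨fun p => g0 p.2, by fun_prop, ?_, fun _ => rfl, fun _ _ _ => rfl⟩
      intro p i
      rw [hτ0]; exact hne _ _
    | succ j ih =>
      obtain ⟨G, hGc, hGne, hG0, hGconst⟩ := ih
      refine ⟨fun p => push ε (H (τ j p.1, p.2)) (H (τ (j + 1) p.1, p.2)) (G p), ?_, ?_, ?_, ?_⟩
      · have h1 := hτc j
        have h2 := hτc (j + 1)
        exact push_continuous ε (by fun_prop) (by fun_prop) hGc
      · intro p i h
        beta_reduce at h
        rw [← push_apply hε (H (τ j p.1, p.2)) (H (τ (j + 1) p.1, p.2))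
          (fun i j hij => hsep i j hij _) i] at h
        refine hGne p i (push_injective hε _ _ hηε (fun i => ?_) h)
        have hd : dist (H (τ (j + 1) p.1, p.2)) (H (τ j p.1, p.2)) < η := by
          apply hunif
          rw [Prod.dist_eq, dist_self, max_eq_left dist_nonneg]
          exact hτd j p.1
        rw [← dist_eq_norm]
        exact (dist_le_pi_dist _ _ i).trans hd.le
      · intro y
        simp only [hτz, push_self, hG0]
      · intro t y hy
        simp only [hy (τ j t), hy (τ (j + 1) t), push_self, hGconst t y hy]
  obtain ⟨G, h1, h2, h3, h4⟩ := key (N + 1)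
  refine ⟨G, h1, fun p i => ?_, h3, h4⟩
  have := h2 p i
  rwa [hτN] at this

/-- The configuration space. -/
abbrev Conf (P : Set ℂ) (n : ℕ) : Type :=
  {f : Fin n → ℂ // Function.Injective f ∧ ∀ i, f i ∉ P}

lemma snoc_mem {P : Set ℂ} {n : ℕ} {a : Fin n → ℂ} {z : ℂ} (ha : Function.Injective a)
    (haP : ∀ i, a i ∉ P) (hz : z ∉ P) (hza : ∀ i, z ≠ a i) :
    Function.Injective (Fin.snoc a z : Fin (n + 1) → ℂ) ∧
      ∀ i, (Fin.snoc a z : Fin (n + 1) → ℂ) i ∉ P := by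
  constructor
  · rw [Fin.snoc_injective_iff]
    exact ⟨ha, by rintro ⟨i, hi⟩; exact hza i hi.symm⟩
  · intro i
    refine Fin.lastCases ?_ (fun j => ?_) i
    · simpa using hz
    · simpa using haP j

lemma conf_null {k : ℕ} (hk : 2 ≤ k) (P : Set ℂ) (hP : P.Finite) (n : ℕ) :
    ∀ (c : Conf P n) (f : C(Fin k → I, Conf P n)), (∀ y ∈ Cube.boundary (Fin k), f y = c) →
      f.HomotopicRel (ContinuousMap.const _ c) (Cube.boundary (Fin k)) := by
  induction n with
  | zero =>
    intro c f _
    have : f = ContinuousMap.const _ c := by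
      ext y i; exact i.elim0
    rw [this]
    exact ContinuousMap.HomotopicRel.refl _
  | succ n ih =>
    intro c f hf
    have hfc : Continuous fun y => (f y).1 := continuous_subtype_val.comp (map_continuous f)
    let c1 : Conf P n := ⟨fun i => c.1 i.castSucc,
      c.2.1.comp (Fin.castSucc_injective n), fun i => c.2.2 _⟩
    let f1 : C(Fin k → I, Conf P n) := ⟨fun y => ⟨fun i => (f y).1 i.castSucc,
      (f y).2.1.comp (Fin.castSucc_injective n), fun i => (f y).2.2 _⟩, by
        apply Continuous.subtype_mk
        exact continuous_pi fun i => (continuous_apply _).comp hfc⟩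
    obtain ⟨H1⟩ := ih c1 f1 (by
      intro y hy
      apply Subtype.ext
      funext i
      simp only [f1, c1, ContinuousMap.coe_mk, hf y hy])
    have hH1c : Continuous fun p => (H1 p).1 :=
      continuous_subtype_val.comp (map_continuous H1)
    have : Fintype P := hP.fintype
    have hH1z : ∀ y i, (H1 (0, y)).1 i = (f y).1 i.castSucc := by
      intro y i; rw [H1.apply_zero]; rfl
    obtain ⟨G, hGc, hGne, hG0, hGconst⟩ := exists_extra_point (ι := Fin n ⊕ P)
      (H := fun p : I × (Fin k → I) => Sum.elim (H1 p).1 Subtype.val)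
      (by
        apply continuous_pi
        rintro (i | i)
        · simp only [Sum.elim_inl]; exact (continuous_apply i).comp hH1c
        · simp only [Sum.elim_inr]; fun_prop)
      (by
        intro p
        refine (H1 p).2.1.sumElim Subtype.val_injective ?_
        intro i q h
        apply (H1 p).2.2 i
        rw [h]; exact q.2)
      (fun y => (f y).1 (Fin.last n)) ((continuous_apply _).comp hfc)
      (by
        rintro y (i | q)
        · simp only [Sum.elim_inl, hH1z]
          intro h
          exact absurd ((f y).2.1 h) (Fin.castSucc_lt_last i).ne'
        · simp only [Sum.elim_inr]
          intro h
          apply (f y).2.2 (Fin.last n)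
          rw [h]; exact q.2)
    have hGP : ∀ p, G p ∉ P := fun p h => hGne p (Sum.inr ⟨G p, h⟩) rfl
    have hG1 : ∀ p i, G p ≠ (H1 p).1 i := fun p i h => hGne p (Sum.inl i) h
    have hGb : ∀ t, ∀ y ∈ Cube.boundary (Fin k), G (t, y) = c.1 (Fin.last n) := by
      intro t y hy
      rw [hGconst t y, hf y hy]
      intro t'
      rw [H1.eq_fst t' hy, H1.eq_fst 0 hy]
    have hH1b : ∀ t, ∀ y ∈ Cube.boundary (Fin k), H1 (t, y) = c1 := by
      intro t y hy
      rw [H1.eq_snd t hy]; rfl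
    have hcsnoc : (Fin.snoc c1.1 (c.1 (Fin.last n)) : Fin (n + 1) → ℂ) = c.1 := by
      funext i
      refine Fin.lastCases ?_ (fun j => ?_) i <;> simp [c1]
    -- first homotopy
    let K1 : I × (Fin k → I) → Conf P (n + 1) := fun p =>
      ⟨Fin.snoc (H1 p).1 (G p), snoc_mem (H1 p).2.1 (H1 p).2.2 (hGP p) (hG1 p)⟩
    have hK1c : Continuous K1 := by
      apply Continuous.subtype_mk
      apply continuous_pi
      intro i
      refine Fin.lastCases ?_ (fun j => ?_) i
      · simpa using hGc
      · simp only [Fin.snoc_castSucc]; exact (continuous_apply j).comp hH1c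
    have hK10 : ∀ y, K1 (0, y) = f y := by
      intro y
      apply Subtype.ext
      funext i
      refine Fin.lastCases ?_ (fun j => ?_) i
      · simp [K1, hG0]
      · simp only [K1, Fin.snoc_castSucc, hH1z]
    have hK1b : ∀ t, ∀ y ∈ Cube.boundary (Fin k), K1 (t, y) = c := by
      intro t y hy
      apply Subtype.ext
      simp only [K1]
      rw [hGb t y hy, hH1b t y hy, hcsnoc]
    let f2 : C(Fin k → I, Conf P (n + 1)) := ⟨fun y => K1 (1, y), by fun_prop⟩
    have hom1 : f.HomotopicRel f2 (Cube.boundary (Fin k)) :=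
      ⟨{ toFun := K1
         continuous_toFun := hK1c
         map_zero_left := hK10
         map_one_left := fun y => rfl
         prop' := fun t y hy => by
          change K1 (t, y) = f y
          rw [hK1b t y hy, hf y hy] }⟩
    refine hom1.trans ?_
    -- second homotopy, in the fibre
    have hH11 : ∀ y, H1 (1, y) = c1 := fun y => by rw [H1.apply_one]; rfl
    obtain ⟨L, hLc, hL0, hL1, hLb, hLm⟩ := plane_null hk (Q := P ∪ range c1.1)
      (hP.union (finite_range _)).isClosed (f := fun y => G (1, y)) (by fun_prop)
      (c.1 (Fin.last n)) (fun y hy => hGb 1 y hy) (by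
        rintro y (h | ⟨i, h⟩)
        · exact hGP _ h
        · apply hG1 (1, y) i
          rw [hH11]; exact h.symm)
    let K2 : I × (Fin k → I) → Conf P (n + 1) := fun p =>
      ⟨Fin.snoc c1.1 (L p), snoc_mem c1.2.1 c1.2.2 (fun h => hLm p (Or.inl h))
        (fun i h => hLm p (Or.inr ⟨i, h.symm⟩))⟩
    have hK2c : Continuous K2 := by
      apply Continuous.subtype_mk
      apply continuous_pi
      intro i
      refine Fin.lastCases ?_ (fun j => ?_) i
      · simpa using hLc
      · simp only [Fin.snoc_castSucc]; fun_prop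
    refine ⟨{ toFun := K2
              continuous_toFun := hK2c
              map_zero_left := fun y => ?_
              map_one_left := fun y => ?_
              prop' := fun t y hy => ?_ }⟩
    · apply Subtype.ext
      simp only [K2, f2, K1, ContinuousMap.coe_mk]
      rw [hL0, hH11]
    · apply Subtype.ext
      simp only [K2, ContinuousMap.const_apply]
      rw [hL1, hcsnoc]
    · change K2 (t, y) = K1 (1, y)
      rw [hK1b 1 y hy]
      apply Subtype.ext
      simp only [K2]
      rw [hLb t y hy, hcsnoc]

end KoebeConf

/-- The configuration space of `n` ordered points in `ℂ` avoiding a finite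
set `P` is aspherical: all its homotopy groups `π_k`, `k ≥ 2`, are trivial. -/
theorem configurationSpace_complex_aspherical
    (P : Set ℂ) (hP : P.Finite) (n : ℕ) :
    ∀ k : ℕ, 2 ≤ k →
      ∀ x : {f : Fin n → ℂ // Function.Injective f ∧ ∀ i, f i ∉ P},
        Subsingleton
          (HomotopyGroup (Fin k)
            {f : Fin n → ℂ // Function.Injective f ∧ ∀ i, f i ∉ P} x) := by
  intro k hk x
  constructor
  intro a b
  induction a using Quotient.inductionOn with
  | h f =>
  induction b using Quotient.inductionOn with
  | h g =>
  apply Quotient.sound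
  exact (KoebeConf.conf_null hk P hP n x f.1 f.2).trans
    (KoebeConf.conf_null hk P hP n x g.1 g.2).symm
end

section
/- Let n ≥ 1, let Conf_n(ℂ) = {f : Fin n → ℂ | f injective} be the ordered configuration space of n points in ℂ, let x be a basepoint of Conf_n(ℂ), and let P = π₁(Conf_n(ℂ), x) be its fundamental group (the pure braid group on n strands). Then P admits a filtration by subgroups 1 = G₀ ≤ G₁ ≤ ⋯ ≤ Gₙ = P such that each Gᵢ is a normal subgroup of P and, for each i < n, the quotient group G_{i+1}/Gᵢ is a finitely generated free group. -/
open scoped unitInterval Topology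
namespace PureBraid

/-- `P` has a filtration of length `n` by normal subgroups with f.g. free quotients. -/
def HasFilt (P : Type*) [Group P] (n : ℕ) : Prop :=
  ∃ G : Fin (n + 1) → Subgroup P,
      G 0 = ⊥ ∧ G (Fin.last n) = ⊤ ∧
      (∀ i, (G i).Normal) ∧
      (∀ i : Fin n, G i.castSucc ≤ G i.succ) ∧
      (∀ i : Fin n, ∃ (k : ℕ) (ψ : (G i.succ) →* FreeGroup (Fin k)),
        Function.Surjective ψ ∧
        ∀ g : G i.succ, ψ g = 1 ↔ (g : P) ∈ G i.castSucc)

theorem HasFilt.step {P Q : Type*} [Group P] [Group Q] {n k : ℕ} (φ : P →* Q)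
    (hφ : Function.Surjective φ) (hQ : HasFilt Q n) (e : FreeGroup (Fin k) →* P)
    (he : Function.Injective e) (hr : e.range = φ.ker) : HasFilt P (n + 1) := by
  obtain ⟨G, h0, hl, hN, hle, hq⟩ := hQ
  refine ⟨Fin.cases ⊥ (fun i => (G i).comap φ), rfl, ?_, ?_, ?_, ?_⟩
  · rw [← Fin.succ_last]
    change (G (Fin.last n)).comap φ = ⊤
    rw [hl, Subgroup.comap_top]
  · intro i
    refine Fin.cases ?_ (fun i => ?_) i
    · exact inferInstanceAs (⊥ : Subgroup P).Normal
    · exact (hN i).comap φ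
  · intro i
    refine Fin.cases ?_ (fun i => ?_) i
    · exact bot_le
    · rw [Fin.castSucc_succ]
      exact Subgroup.comap_mono (hle i)
  · intro i
    refine Fin.cases ?_ (fun i => ?_) i
    · -- the kernel
      have hk : (G 0).comap φ = e.range := by rw [h0, hr]; rfl
      let E : FreeGroup (Fin k) ≃* e.range := MonoidHom.ofInjective he
      let c : ((G 0).comap φ) ≃* e.range := MulEquiv.subgroupCongr hk
      refine ⟨k, (E.symm.toMonoidHom.comp c.toMonoidHom), ?_, ?_⟩
      · exact (E.symm.surjective).comp c.surjective
      · intro g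
        have : (E.symm.toMonoidHom.comp c.toMonoidHom) g = 1 ↔ g = 1 := by
          change E.symm (c g) = 1 ↔ _
          rw [map_eq_one_iff _ E.symm.injective]
          exact map_eq_one_iff c c.injective
        refine this.trans ?_
        change _ ↔ (g : P) ∈ (⊥ : Subgroup P)
        rw [Subgroup.mem_bot]
        exact ⟨fun h => by rw [h]; rfl, fun h => Subtype.ext h⟩
    · obtain ⟨k, ψ, hs, hψ⟩ := hq i
      let r : ((G i.succ).comap φ) →* G i.succ := φ.subgroupComap (G i.succ)
      refine ⟨k, ψ.comp r, ?_, ?_⟩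
      · refine hs.comp ?_
        rintro ⟨q, hq⟩
        obtain ⟨p, rfl⟩ := hφ q
        exact ⟨⟨p, hq⟩, rfl⟩
      · intro g
        exact hψ (r g)

theorem HasFilt.of_subsingleton {P : Type*} [Group P] [Subsingleton P] : HasFilt P 0 :=
  ⟨fun _ => ⊥, rfl, Subsingleton.elim _ _, fun _ => inferInstance, fun i => i.elim0, fun i => i.elim0⟩

/-- An element of a free group on at least two letters commuting with everything is trivial. -/
theorem freeGroup_center {α : Type*} [DecidableEq α] [Nontrivial α] (w : FreeGroup α)
    (hw : ∀ v, v * w = w * v) : w = 1 := by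
  by_contra hne
  obtain ⟨⟨a, ε⟩, l, hl⟩ : ∃ a l, w.toWord = a :: l := by
    cases h : w.toWord with
    | nil => exact absurd (FreeGroup.toWord_eq_nil_iff.1 h) hne
    | cons a l => exact ⟨a, l, rfl⟩
  obtain ⟨j, hj⟩ := exists_ne a
  have h1 : (FreeGroup.of j * w).toWord = (j, true) :: w.toWord := by
    rw [FreeGroup.toWord_mul, FreeGroup.toWord_of]
    have : FreeGroup.IsReduced ((j, true) :: w.toWord) := by
      have := FreeGroup.isReduced_toWord (x := w)
      rw [hl] at this ⊢
      rw [FreeGroup.isReduced_cons_cons]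
      exact ⟨fun h => absurd h hj, this⟩
    exact this.reduce_eq
  have h2 : (w * FreeGroup.of j).toWord = w.toWord ++ [(j, true)] := by
    have hs : ((w * FreeGroup.of j).toWord).Sublist (w.toWord ++ [(j, true)]) := by
      have := FreeGroup.toWord_mul_sublist w (FreeGroup.of j)
      rwa [FreeGroup.toWord_of] at this
    refine hs.eq_of_length ?_
    rw [← hw, h1]; simp
  rw [hw, h2, hl] at h1
  simp at h1
  exact hj h1.1.1.symm


/-- Elementary push map. -/
noncomputable def push {m : ℕ} (r : ℝ) (b b' : Fin m → ℂ) (z : ℂ) : ℂ :=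
  z + ∑ i, ((max 0 (1 - ‖z - b i‖ / r) : ℝ) : ℂ) * (b' i - b i)

theorem push_self {m : ℕ} (r : ℝ) (b : Fin m → ℂ) (z : ℂ) : push r b b z = z := by
  simp [push]

theorem push_apply {m : ℕ} {r : ℝ} (hr : 0 < r) (b b' : Fin m → ℂ)
    (hb : ∀ i j, i ≠ j → r ≤ ‖b i - b j‖) (i : Fin m) : push r b b' (b i) = b' i := by
  unfold push
  rw [Finset.sum_eq_single i]
  · simp
  · intro j _ hj
    have : 1 ≤ ‖b i - b j‖ / r := by
      rw [one_le_div hr]; exact hb i j hj.symm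
    rw [max_eq_left (by linarith)]; simp
  · simp

theorem push_injective {m : ℕ} {r : ℝ} (hr : 0 < r) (b b' : Fin m → ℂ)
    (hb : ∀ i, ‖b' i - b i‖ * (m + 1) ≤ r) : Function.Injective (push r b b') := by
  intro z w h
  by_contra hne
  have hpos : 0 < ‖z - w‖ := norm_pos_iff.2 (sub_ne_zero.2 hne)
  have key : z - w = ∑ i, (((max 0 (1 - ‖w - b i‖ / r) : ℝ) : ℂ) -
      ((max 0 (1 - ‖z - b i‖ / r) : ℝ) : ℂ)) * (b' i - b i) := by
    simp only [sub_mul, Finset.sum_sub_distrib]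
    unfold push at h
    linear_combination h
  have hi : ∀ i ∈ (Finset.univ : Finset (Fin m)), ‖(((max 0 (1 - ‖w - b i‖ / r) : ℝ) : ℂ) -
      ((max 0 (1 - ‖z - b i‖ / r) : ℝ) : ℂ)) * (b' i - b i)‖ ≤ ‖z - w‖ / (m + 1) := by
    intro i _
    rw [norm_mul, ← Complex.ofReal_sub, Complex.norm_real, Real.norm_eq_abs]
    have h1 : |max 0 (1 - ‖w - b i‖ / r) - max 0 (1 - ‖z - b i‖ / r)| ≤ ‖z - w‖ / r := by
      rw [max_comm 0, max_comm 0]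
      refine (abs_max_sub_max_le_abs (1 - ‖w - b i‖ / r) (1 - ‖z - b i‖ / r) 0).trans ?_
      have : (1 - ‖w - b i‖ / r) - (1 - ‖z - b i‖ / r) = (‖z - b i‖ - ‖w - b i‖) / r := by ring
      rw [this, abs_div, abs_of_pos hr]
      gcongr
      have := abs_norm_sub_norm_le (z - b i) (w - b i)
      simpa using this
    calc _ ≤ ‖z - w‖ / r * (r / (m + 1)) := by
          gcongr
          rw [le_div_iff₀ (by positivity)]
          exact hb i
      _ = _ := by field_simp
  have h2 : ‖z - w‖ ≤ m * (‖z - w‖ / (m + 1)) := by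
    calc ‖z - w‖ = _ := congrArg norm key
      _ ≤ _ := norm_sum_le_of_le _ hi
      _ = _ := by simp
  have : (m : ℝ) * (‖z - w‖ / (m + 1)) < ‖z - w‖ := by
    rw [mul_div_assoc', div_lt_iff₀ (by positivity)]
    nlinarith
  linarith

/-- Transport: a continuous family of paths of configurations is covered by a continuous family
of injective maps of the plane. -/
theorem exists_transport {A : Type*} [PseudoMetricSpace A] [CompactSpace A] {m : ℕ}
    (G : A → I → Fin m → ℂ) (hG : Continuous fun q : A × I => G q.1 q.2)
    (hinj : ∀ a t, Function.Injective (G a t)) :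
    ∃ T : A → ℂ → ℂ, (Continuous fun q : A × ℂ => T q.1 q.2) ∧
      (∀ a, Function.Injective (T a)) ∧ (∀ a i, T a (G a 0 i) = G a 1 i) ∧
      (∀ a, (∀ t, G a t = G a 0) → ∀ z, T a z = z) := by
  -- minimal distance
  obtain ⟨r, hr, hrb⟩ : ∃ r : ℝ, 0 < r ∧ ∀ a t i j, i ≠ j → r ≤ ‖G a t i - G a t j‖ := by
    have h1 : ∀ ij : Fin m × Fin m, ∃ r : ℝ, 0 < r ∧ ∀ a t, ij.1 ≠ ij.2 →
        r ≤ ‖G a t ij.1 - G a t ij.2‖ := by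
      rintro ⟨i, j⟩
      by_cases hij : i = j
      · exact ⟨1, one_pos, fun _ _ h => absurd hij h⟩
      have hc : Continuous fun q : A × I => ‖G q.1 q.2 i - G q.1 q.2 j‖ := by fun_prop
      have hp : ∀ q ∈ (Set.univ : Set (A × I)), 0 < ‖G q.1 q.2 i - G q.1 q.2 j‖ := by
        intro q _
        exact norm_pos_iff.2 (sub_ne_zero.2 fun h => hij (hinj _ _ h))
      obtain ⟨r, hr, h⟩ := isCompact_univ.exists_forall_le' hc.continuousOn hp
      exact ⟨r, hr, fun a t _ => h (a, t) trivial⟩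
    choose r hr h using h1
    by_cases hm : Nonempty (Fin m × Fin m)
    · obtain ⟨p, hp⟩ := Finite.exists_min r
      exact ⟨r p, hr p, fun a t i j hij => (hp (i, j)).trans (h (i, j) a t hij)⟩
    · exact ⟨1, one_pos, fun a t i j => absurd ⟨(i, j)⟩ hm⟩
  have huc : UniformContinuous fun q : A × I => G q.1 q.2 :=
    CompactSpace.uniformContinuous_of_continuous hG
  obtain ⟨δ, hδ, hd⟩ := Metric.uniformContinuous_iff.1 huc (r / (m + 1)) (by positivity)
  obtain ⟨N, hN⟩ := exists_nat_one_div_lt hδ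
  let τ : ℕ → I := fun k => Set.projIcc 0 1 zero_le_one ((k : ℝ) / (N + 1))
  have hτ : ∀ k, dist (τ (k + 1)) (τ k) < δ := by
    intro k
    refine lt_of_le_of_lt ?_ hN
    have := (LipschitzWith.projIcc (zero_le_one (α := ℝ))).dist_le_mul
      (((k + 1 : ℕ) : ℝ) / (N + 1)) ((k : ℝ) / (N + 1))
    refine this.trans ?_
    rw [Real.dist_eq, ← sub_div]
    push_cast
    rw [add_sub_cancel_left, abs_of_pos (by positivity)]
    simp
  have hτ0 : τ 0 = 0 := by simp [τ]
  have hτN : τ (N + 1) = 1 := by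
    simp only [τ]; push_cast
    rw [div_self (by positivity)]; simp
  have main : ∀ k, ∃ T : A → ℂ → ℂ, (Continuous fun q : A × ℂ => T q.1 q.2) ∧
      (∀ a, Function.Injective (T a)) ∧ (∀ a i, T a (G a 0 i) = G a (τ k) i) ∧
      (∀ a, (∀ t, G a t = G a 0) → ∀ z, T a z = z) := by
    intro k
    induction k with
    | zero =>
      exact ⟨fun _ z => z, continuous_snd, fun _ => Function.injective_id,
        fun a i => by rw [hτ0], fun _ _ _ => rfl⟩
    | succ k ih =>
      obtain ⟨T, hc, hi, hv, hid⟩ := ih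
      refine ⟨fun a z => push r (G a (τ k)) (G a (τ (k + 1))) (T a z), ?_, ?_, ?_, ?_⟩
      · have h1 : ∀ k, Continuous fun q : A × ℂ => G q.1 (τ k) := fun k =>
          hG.comp (by fun_prop : Continuous fun q : A × ℂ => (q.1, τ k))
        have h2 := h1 k
        have h3 := h1 (k + 1)
        unfold push
        fun_prop
      · intro a
        refine (push_injective hr _ _ ?_).comp (hi a)
        intro i
        have h1 : dist (a, τ (k + 1)) (a, τ k) < δ := by
          rw [Prod.dist_eq]; simpa using hτ k
        have h2 := hd h1
        have h3 := (dist_le_pi_dist (G a (τ (k+1))) (G a (τ k)) i).trans h2.le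
        rw [dist_eq_norm, le_div_iff₀ (by positivity)] at h3
        exact h3
      · intro a i
        change push r _ _ (T a (G a 0 i)) = _
        rw [hv, push_apply hr _ _ (fun i j hij => hrb a _ i j hij)]
      · intro a h z
        change push r _ _ (T a z) = _
        rw [hid a h, h, h (τ (k + 1)), push_self]
  have := main (N + 1)
  rwa [hτN] at this


section Cover
variable {X : Type} [TopologicalSpace X] {G : Type} [Group G] [TopologicalSpace G]
  [DiscreteTopology G]

/-- The coordinates on the two charts. -/
def kap (k : X → G) : Bool → X → G := fun i x => if i then 1 else k x

open Classical in
/-- The covering glued from two sheets `U`, `V` along the locally constant cocycle `k`. -/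
noncomputable def core (U V : Set X) (hU : IsOpen U) (hV : IsOpen V) (hUV : U ∪ V = Set.univ)
    (k : X → G) (hk : ContinuousOn k (U ∩ V)) : FiberBundleCore Bool X G where
  baseSet i := if i then U else V
  isOpen_baseSet i := by cases i <;> simpa
  indexAt x := if x ∈ U then true else false
  mem_baseSet_at x := by
    by_cases h : x ∈ U
    · simp [h]
    · have : x ∈ U ∪ V := by rw [hUV]; trivial
      simpa [h] using this
  coordChange i j x v := kap k j x * (kap k i x)⁻¹ * v
  coordChange_self i x _ v := by simp
  continuousOn_coordChange i j := by
    have h1 : ContinuousOn (fun p : X × G => k p.1) ((U ∩ V) ×ˢ Set.univ) :=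
      hk.comp continuousOn_fst (fun p hp => hp.1)
    cases i <;> cases j
    · simpa [kap] using continuousOn_snd
    · simp only [kap, if_true, Bool.false_eq_true, if_false, one_mul]
      rw [Set.inter_comm V U]
      exact h1.inv.mul continuousOn_snd
    · simp only [kap, if_true, Bool.false_eq_true, if_false, inv_one, mul_one]
      exact h1.mul continuousOn_snd
    · simpa [kap] using continuousOn_snd
  coordChange_comp i j l x _ v := by group

theorem exists_monodromy (U V : Set X) (hU : IsOpen U) (hV : IsOpen V) (hUV : U ∪ V = Set.univ)
    (k : X → G) (hk : ContinuousOn k (U ∩ V)) (x0 : X) (hk0 : k x0 = 1) :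
    ∃ (F : Type) (ρ : FundamentalGroup X x0 →* Equiv.Perm F) (e : G → F), Function.Injective e ∧
      ∀ y ∈ U ∩ V, ∀ (a : Path x0 y) (b : Path y x0), (∀ t, a t ∈ U) → (∀ t, b t ∈ V) → ∀ v,
        ρ (FundamentalGroup.fromPath (.mk (a.trans b))) (e v) = e (k y * v) := by
  let Z := core U V hU hV hUV k hk
  have cov : IsCoveringMap Z.proj := FiberBundle.isCoveringMap (F := G) (E := Z.Fiber)
  let sec : Bool → X → G → Z.TotalSpace := fun i x v => ⟨x, Z.coordChange i (Z.indexAt x) x v⟩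
  have hsec : ∀ i x v, Z.proj (sec i x v) = x := fun _ _ _ => rfl
  have lift : ∀ (i : Bool) (x y : X) (p : Path x y), (∀ t, p t ∈ Z.baseSet i) → ∀ v,
      cov.monodromy (.mk p) ⟨sec i x v, rfl⟩ = ⟨sec i y v, rfl⟩ := by
    intro i x y p hp v
    let Γ : Path (sec i x v) (sec i y v) :=
      { toFun := fun t => sec i (p t) v
        continuous_toFun := by
          have h1 := (Z.localTriv i).toOpenPartialHomeomorph.continuousOn_symm
          have h2 : Continuous fun t => (p t, v) := by fun_prop
          refine h1.comp_continuous h2 (fun t => ?_)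
          rw [Z.mem_localTriv_target]
          exact hp t
        source' := by simp
        target' := by simp }
    refine cov.monodromy_eq_of_map_eq (ex := ⟨sec i x v, rfl⟩) (ey := ⟨sec i y v, rfl⟩) (.mk Γ) ?_
    exact congrArg Path.Homotopic.Quotient.mk (Path.ext (funext fun t => rfl))
  have cc : ∀ i j x v, Z.coordChange i j x v = kap k j x * (kap k i x)⁻¹ * v :=
    fun _ _ _ _ => rfl
  have hsw : ∀ x v, sec true x v = sec false x (k x * v) := by
    intro x v
    exact congrArg (fun w => (⟨x, w⟩ : Z.TotalSpace)) (by
      rw [cc, cc]; cases Z.indexAt x <;> simp [kap] <;> rfl)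
  refine ⟨Z.proj ⁻¹' {x0}, cov.monodromyPerm x0, fun v => ⟨sec true x0 v, rfl⟩, ?_, ?_⟩
  · intro v w h
    have h1 : sec true x0 v = sec true x0 w := congrArg Subtype.val h
    have h2 : Z.coordChange true (Z.indexAt x0) x0 v = Z.coordChange true (Z.indexAt x0) x0 w :=
      eq_of_heq (Bundle.TotalSpace.mk.inj h1).2
    rw [cc, cc] at h2
    exact mul_left_cancel h2
  · intro y hy a b ha hb v
    have h1 := lift true x0 y a ha v
    have h2 := lift false y x0 b hb (k y * v)
    have h3 := cov.monodromy_trans_apply (.mk a) (.mk b) ⟨sec true x0 v, rfl⟩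
    rw [h1] at h3
    change cov.monodromy (.mk (a.trans b)) _ = _
    rw [Path.Homotopic.Quotient.mk_trans, h3]
    have h4 : (⟨sec true y v, rfl⟩ : Z.proj ⁻¹' {y}) = ⟨sec false y (k y * v), rfl⟩ :=
      Subtype.ext (hsw y v)
    rw [h4, h2]
    refine Subtype.ext ?_
    change sec false x0 _ = sec true x0 _
    rw [hsw, hk0, one_mul]

end Cover

section VK
variable {X : Type} [TopologicalSpace X]

theorem homotopic_of_mem {U : Set X} (hU : IsSimplyConnected U) {a b : X} (p q : Path a b)
    (hp : ∀ t, p t ∈ U) (hq : ∀ t, q t ∈ U) :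
    Path.Homotopic.Quotient.mk p = Path.Homotopic.Quotient.mk q := by
  have := hU.simplyConnectedSpace
  have ha : a ∈ U := by simpa using hp 0
  have hb : b ∈ U := by simpa using hp 1
  have L : ∀ r : Path a b, (∀ t, r t ∈ U) →
      ∃ r' : Path (⟨a, ha⟩ : U) ⟨b, hb⟩, r'.map continuous_subtype_val = r := by
    intro r hr
    refine ⟨{ toFun := fun t => ⟨r t, hr t⟩
              continuous_toFun := by fun_prop
              source' := by simp
              target' := by simp }, ?_⟩
    ext; rfl
  obtain ⟨p', rfl⟩ := L p hp
  obtain ⟨q', rfl⟩ := L q hq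
  rw [Path.Homotopic.Quotient.eq]
  exact (SimplyConnectedSpace.paths_homotopic p' q').map ⟨_, continuous_subtype_val⟩

theorem exists_path_mem {U : Set X} (hU : IsSimplyConnected U) {a b : X} (ha : a ∈ U)
    (hb : b ∈ U) : ∃ p : Path a b, ∀ t, p t ∈ U := by
  obtain ⟨p, hp⟩ := hU.isPathConnected.joinedIn a ha b hb
  exact ⟨p, hp⟩

theorem trans_mem {U : Set X} {a b c : X} {p : Path a b} {q : Path b c} (hp : ∀ t, p t ∈ U)
    (hq : ∀ t, q t ∈ U) (t : I) : p.trans q t ∈ U := by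
  rw [Path.trans_apply]; split_ifs
  exacts [hp _, hq _]

theorem symm_mem {U : Set X} {a b : X} {p : Path a b} (hp : ∀ t, p t ∈ U) (t : I) :
    p.symm t ∈ U := hp _

/-- Van Kampen for two simply connected open sets whose intersection has finitely many
components. -/
theorem free_of_cover (U V : Set X) (hU : IsOpen U) (hV : IsOpen V) (hUV : U ∪ V = Set.univ)
    (sU : IsSimplyConnected U) (sV : IsSimplyConnected V) {m : ℕ} (c : X → Fin (m + 1))
    (hc : ContinuousOn c (U ∩ V))
    (hj : ∀ y ∈ U ∩ V, ∀ z ∈ U ∩ V, c y = c z → JoinedIn (U ∩ V) y z)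
    (y : Fin (m + 1) → X) (hy : ∀ i, y i ∈ U ∩ V) (hcy : ∀ i, c (y i) = i) :
    Nonempty (FreeGroup (Fin m) ≃* FundamentalGroup X (y 0)) := by
  have hA : ∀ i, ∃ p : Path (y 0) (y i), ∀ t, p t ∈ U := fun i =>
    exists_path_mem sU (hy 0).1 (hy i).1
  have hB : ∀ i, ∃ p : Path (y i) (y 0), ∀ t, p t ∈ V := fun i =>
    exists_path_mem sV (hy i).2 (hy 0).2
  choose a ha using hA
  choose b hb using hB
  let s : Fin (m + 1) → FundamentalGroup X (y 0) := fun i =>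
    FundamentalGroup.fromPath (.mk ((a i).trans (b i)))
  let Ψ : FreeGroup (Fin m) →* FundamentalGroup X (y 0) := FreeGroup.lift fun i => s i.succ
  refine ⟨MulEquiv.ofBijective Ψ ⟨?_, ?_⟩⟩
  · -- injectivity through monodromy
    let : TopologicalSpace (FreeGroup (Fin m)) := ⊥
    have : DiscreteTopology (FreeGroup (Fin m)) := ⟨rfl⟩
    let g : Fin (m + 1) → FreeGroup (Fin m) := Fin.cases 1 FreeGroup.of
    obtain ⟨F, ρ, e, he, hρ⟩ := exists_monodromy U V hU hV hUV (fun x => g (c x))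
      ((continuous_of_discreteTopology (f := g)).comp_continuousOn hc) (y 0)
      (by simp [hcy, g])
    have hs : ∀ i v, ρ (s (Fin.succ i)) (e v) = e (FreeGroup.of i * v) := by
      intro i v
      have := hρ _ (hy i.succ) (a i.succ) (b i.succ) (ha _) (hb _) v
      simp only [hcy] at this
      exact this
    have key : ∀ w v, ρ (Ψ w) (e v) = e (w * v) := by
      intro w
      induction w using FreeGroup.induction_on with
      | C1 => intro v; rw [map_one, map_one, one_mul]; rfl
      | of i => intro v; simpa [Ψ] using hs i v
      | inv_of i hi =>
        intro v
        rw [map_inv, map_inv, Equiv.Perm.inv_eq_iff_eq, hi]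
        simp
      | mul x z hx hz =>
        intro v
        rw [map_mul, map_mul, Equiv.Perm.mul_apply, hz, hx, mul_assoc]
    intro w w' h
    have h1 := key w 1
    rw [h, key w' 1] at h1
    simpa using (he h1).symm
  · -- surjectivity
    have hs : ∀ i, s i ∈ Ψ.range := by
      intro i
      refine Fin.cases ?_ (fun i => ?_) i
      · have h1 : Path.Homotopic.Quotient.mk (a 0) = Path.Homotopic.Quotient.mk (Path.refl _) :=
          homotopic_of_mem sU _ _ (ha 0) (fun _ => (hy 0).1)
        have h2 : Path.Homotopic.Quotient.mk (b 0) = Path.Homotopic.Quotient.mk (Path.refl _) :=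
          homotopic_of_mem sV _ _ (hb 0) (fun _ => (hy 0).2)
        have : s 0 = 1 := by
          change Path.Homotopic.Quotient.mk ((a 0).trans (b 0)) = Path.Homotopic.Quotient.mk (Path.refl _)
          rw [Path.Homotopic.Quotient.mk_trans, h1, h2]
          simp
        rw [this]; exact one_mem _
      · exact ⟨FreeGroup.of i, by simp [Ψ]⟩
    let H : Set (Path.Homotopic.Quotient (y 0) (y 0)) := {q | FundamentalGroup.fromPath q ∈ Ψ.range}
    have Hmul : ∀ p q : Path.Homotopic.Quotient (y 0) (y 0), p ∈ H → q ∈ H → p.trans q ∈ H := fun p q hp hq =>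
      Ψ.range.mul_mem hq hp
    have Hinv : ∀ p : Path.Homotopic.Quotient (y 0) (y 0), p ∈ H → p.symm ∈ H := fun p hp =>
      Ψ.range.inv_mem hp
    -- comparison of U paths and V paths
    have comp : ∀ (z : X) (p q : Path (y 0) z), (∀ t, p t ∈ U) → (∀ t, q t ∈ V) →
        (Path.Homotopic.Quotient.mk p).trans (Path.Homotopic.Quotient.mk q).symm ∈ H := by
      intro z p q hp hq
      have hz : z ∈ U ∩ V := ⟨by simpa using hp 1, by simpa using hq 1⟩
      obtain ⟨r, hr⟩ := hj z hz (y (c z)) (hy _) (hcy _).symm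
      have h1 : Path.Homotopic.Quotient.mk p = Path.Homotopic.Quotient.mk ((a (c z)).trans r.symm) :=
        homotopic_of_mem sU _ _ hp (trans_mem (ha _) (symm_mem fun t => (hr t).1))
      have h2 : Path.Homotopic.Quotient.mk q = Path.Homotopic.Quotient.mk ((b (c z)).symm.trans r.symm) :=
        homotopic_of_mem sV _ _ hq (trans_mem (symm_mem (hb _)) (symm_mem fun t => (hr t).2))
      have h3 : (Path.Homotopic.Quotient.mk p).trans (Path.Homotopic.Quotient.mk q).symm = s (c z) := by
        change _ = Path.Homotopic.Quotient.mk ((a (c z)).trans (b (c z)))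
        rw [h1, h2, ← Path.Homotopic.Quotient.mk_symm]
        simp only [Path.trans_symm, Path.symm_symm, Path.Homotopic.Quotient.mk_trans,
          Path.Homotopic.Quotient.mk_symm, Path.Homotopic.Quotient.trans_assoc]
        rw [← Path.Homotopic.Quotient.trans_assoc (Path.Homotopic.Quotient.mk r).symm]
        simp
      rw [h3]
      exact hs _
    let good : ∀ z : X, Path.Homotopic.Quotient (y 0) z → Prop := fun z q =>
      ∃ p : Path (y 0) z, ((∀ t, p t ∈ U) ∨ (∀ t, p t ∈ V)) ∧ q.trans (Path.Homotopic.Quotient.mk p).symm ∈ H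
    have chg : ∀ z (q p p' : Path.Homotopic.Quotient (y 0) z), q.trans p.symm ∈ H → p.trans p'.symm ∈ H →
        q.trans p'.symm ∈ H := by
      intro z q p p' h1 h2
      have := Hmul _ _ h1 h2
      rw [Path.Homotopic.Quotient.trans_assoc, ← Path.Homotopic.Quotient.trans_assoc p.symm] at this
      simpa using this
    have goodU : ∀ z q, good z q → ∀ p : Path (y 0) z, (∀ t, p t ∈ U) →
        q.trans (Path.Homotopic.Quotient.mk p).symm ∈ H := by
      rintro z q ⟨p', h' | h', hq⟩ p hp
      · rwa [homotopic_of_mem sU p p' hp h']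
      · refine chg _ _ _ _ hq ?_
        have := Hinv _ (comp z p p' hp h')
        rw [← Path.Homotopic.Quotient.mk_symm, ← Path.Homotopic.Quotient.mk_trans,
          ← Path.Homotopic.Quotient.mk_symm, Path.trans_symm, Path.symm_symm] at this
        simpa using this
    have goodV : ∀ z q, good z q → ∀ p : Path (y 0) z, (∀ t, p t ∈ V) →
        q.trans (Path.Homotopic.Quotient.mk p).symm ∈ H := by
      rintro z q ⟨p', h' | h', hq⟩ p hp
      · exact chg _ _ _ _ hq (comp z p' p h' hp)
      · rwa [homotopic_of_mem sV p p' hp h']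
    have ext : ∀ z z' (q : Path.Homotopic.Quotient (y 0) z) (r : Path z z'), ((∀ t, r t ∈ U) ∨ (∀ t, r t ∈ V)) →
        good z q → good z' (q.trans (Path.Homotopic.Quotient.mk r)) := by
      intro z z' q r hr hq
      have fin : ∀ p : Path (y 0) z, q.trans (Path.Homotopic.Quotient.mk p).symm ∈ H →
          (q.trans (Path.Homotopic.Quotient.mk r)).trans (Path.Homotopic.Quotient.mk (p.trans r)).symm ∈ H := by
        intro p hp
        rw [← Path.Homotopic.Quotient.mk_symm, Path.trans_symm, Path.Homotopic.Quotient.mk_trans,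
          Path.Homotopic.Quotient.trans_assoc, ← Path.Homotopic.Quotient.trans_assoc (Path.Homotopic.Quotient.mk r)]
        simpa using hp
      rcases hr with hr | hr
      · obtain ⟨p, hp⟩ := exists_path_mem sU (hy 0).1 (by simpa using hr 0 : z ∈ U)
        exact ⟨p.trans r, Or.inl (trans_mem hp hr), fin p (goodU _ _ hq p hp)⟩
      · obtain ⟨p, hp⟩ := exists_path_mem sV (hy 0).2 (by simpa using hr 0 : z ∈ V)
        exact ⟨p.trans r, Or.inr (trans_mem hp hr), fin p (goodV _ _ hq p hp)⟩
    intro q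
    obtain ⟨γ, rfl⟩ := Path.Homotopic.Quotient.mk_surjective q
    let γt : ∀ t, Path (y 0) (γ t) := fun t => (γ.subpath 0 t).cast γ.source.symm rfl
    have hγt : ∀ t t', Path.Homotopic.Quotient.mk (γt t') = (Path.Homotopic.Quotient.mk (γt t)).trans
        (Path.Homotopic.Quotient.mk (γ.subpath t t')) := by
      intro t t'
      rw [← Path.Homotopic.Quotient.mk_trans, Path.Homotopic.Quotient.eq]
      have := (Path.Homotopy.subpathTransSubpath γ 0 t t').symm.pathCast γ.source.symm rfl
      exact ⟨this⟩
    let S : Set I := {t | good _ (Path.Homotopic.Quotient.mk (γt t))}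
    have step : ∀ t t', ((∀ u, γ.subpath t t' u ∈ U) ∨ (∀ u, γ.subpath t t' u ∈ V)) →
        t ∈ S → t' ∈ S := by
      intro t t' h ht
      change good _ _
      rw [hγt t t']
      exact ext _ _ _ _ h ht
    have loc : ∀ t : I, ∃ W ∈ 𝓝 t, ∀ t1 ∈ W, ∀ t2 ∈ W, t1 ∈ S → t2 ∈ S := by
      intro t
      have aux : ∀ O : Set X, IsOpen O → γ t ∈ O → ∃ W ∈ 𝓝 t, ∀ t1 ∈ W, ∀ t2 ∈ W,
          ∀ u, γ.subpath t1 t2 u ∈ O := by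
        intro O hO ht
        have h1 : γ ⁻¹' O ∈ 𝓝 t := (hO.preimage γ.continuous).mem_nhds ht
        obtain ⟨ε, hε, hb⟩ := Metric.mem_nhds_iff.1 h1
        refine ⟨Metric.ball t ε, Metric.ball_mem_nhds _ hε, fun t1 h1 t2 h2 u => ?_⟩
        have h3 : γ.subpath t1 t2 u ∈ Set.range (γ.subpath t1 t2) := ⟨u, rfl⟩
        rw [Path.range_subpath] at h3
        obtain ⟨v, hv, hvu⟩ := h3
        rw [← hvu]
        refine hb ?_
        rw [Metric.mem_ball, Subtype.dist_eq, Real.dist_eq, abs_lt] at *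
        rw [Set.mem_uIcc] at hv
        rcases hv with ⟨h4, h5⟩ | ⟨h4, h5⟩
        · have h4' : (t1 : ℝ) ≤ v := h4
          have h5' : (v : ℝ) ≤ t2 := h5
          constructor <;> linarith
        · have h4' : (t2 : ℝ) ≤ v := h4
          have h5' : (v : ℝ) ≤ t1 := h5
          constructor <;> linarith
      have h2 : γ t ∈ U ∪ V := by rw [hUV]; trivial
      rcases h2 with h2 | h2
      · obtain ⟨W, hW, h⟩ := aux U hU h2
        exact ⟨W, hW, fun t1 h1 t2 h2 => step _ _ (Or.inl (h t1 h1 t2 h2))⟩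
      · obtain ⟨W, hW, h⟩ := aux V hV h2
        exact ⟨W, hW, fun t1 h1 t2 h2 => step _ _ (Or.inr (h t1 h1 t2 h2))⟩
    have hclopen : IsClopen S := by
      constructor
      · rw [← isOpen_compl_iff, isOpen_iff_mem_nhds]
        intro t ht
        obtain ⟨W, hW, h⟩ := loc t
        filter_upwards [hW] with t' ht' h'
        exact ht (h t' ht' t (mem_of_mem_nhds hW) h')
      · rw [isOpen_iff_mem_nhds]
        intro t ht
        obtain ⟨W, hW, h⟩ := loc t
        filter_upwards [hW] with t' ht'
        exact h t (mem_of_mem_nhds hW) t' ht' ht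
    have h0 : (0 : I) ∈ S := by
      refine ⟨γt 0, Or.inl fun t => ?_, ?_⟩
      · change γ.subpath 0 0 t ∈ U
        rw [Path.subpath_self]
        simpa using (hy 0).1
      · rw [Path.Homotopic.Quotient.trans_symm]
        exact one_mem Ψ.range
    have h1 : (1 : I) ∈ S := by
      rw [hclopen.eq_univ ⟨0, h0⟩]; trivial
    have h2 : ∀ z (hz : γ 1 = z) (q : Path.Homotopic.Quotient (y 0) z), q = (Path.Homotopic.Quotient.mk (γt 1)).cast rfl hz.symm
        → good z q := by
      rintro z rfl q rfl
      exact h1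
    have h3 := h2 (y 0) γ.target (Path.Homotopic.Quotient.mk γ) (by
      rw [← Path.Homotopic.Quotient.mk_cast]
      congr 1
      ext t
      simp [γt])
    have h4 := goodU _ _ h3 (Path.refl _) (fun _ => (hy 0).1)
    rw [← Path.Homotopic.Quotient.mk_symm, Path.refl_symm, Path.Homotopic.Quotient.mk_refl,
      Path.Homotopic.Quotient.trans_refl] at h4
    exact h4

end VK

theorem isSimplyConnected_of_ray (W : Set ℂ) (f : ℂ →L[ℝ] ℝ) (d : ℂ) (hd : f d = 1) (L : ℝ)
    (h1 : ∀ z ∈ W, ∀ r : ℝ, 0 ≤ r → z + r • d ∈ W) (h2 : ∀ z, L ≤ f z → z ∈ W) :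
    IsSimplyConnected W := by
  have : ContractibleSpace W := by
    rw [contractible_iff_id_nullhomotopic]
    have hr : ∀ z, L ≤ f (z + (max 0 (L - f z)) • d) := by
      intro z
      simp only [map_add, map_smul, hd, smul_eq_mul, mul_one]
      have := le_max_right 0 (L - f z)
      linarith
    have hL : L ≤ f (L • d) := by rw [map_smul, hd]; simp
    let r : C(W, W) := ⟨fun z => ⟨z.1 + (max 0 (L - f z.1)) • d, h2 _ (hr _)⟩, by fun_prop⟩
    refine ⟨⟨L • d, h2 _ hL⟩, ContinuousMap.Homotopic.trans (g := r) ⟨?_⟩ ⟨?_⟩⟩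
    · exact
      { toFun := fun q => ⟨q.2.1 + ((q.1 : ℝ) * max 0 (L - f q.2.1)) • d,
          h1 _ q.2.2 _ (mul_nonneg q.1.2.1 (le_max_left _ _))⟩
        continuous_toFun := by fun_prop
        map_zero_left := fun z => by simp
        map_one_left := fun z => by simp [r] }
    · exact
      { toFun := fun q => ⟨(1 - (q.1 : ℝ)) • (r q.2).1 + (q.1 : ℝ) • (L • d), h2 _ (by
          rw [map_add, map_smul, map_smul f (q.1 : ℝ)]
          have h3 : L ≤ f (r q.2).1 := hr _
          have h4 := q.1.2.1
          have h5 := q.1.2.2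
          simp only [smul_eq_mul]
          nlinarith)⟩
        continuous_toFun := by fun_prop
        map_zero_left := fun z => by simp
        map_one_left := fun z => by simp }
  exact SimplyConnectedSpace.ofContractible W

/-- The plane minus finitely many points. -/
abbrev Fib {m : ℕ} (b : Fin m → ℂ) : Type := {z : ℂ // ∀ i, z ≠ b i}

/-- The plane minus the vertical rays below (`s = 1`) or above (`s = -1`) the points. -/
def slit {m : ℕ} (b : Fin m → ℂ) (ξ η : ℂ →L[ℝ] ℝ) (s : ℝ) : Set ℂ :=
  {z | ∀ i, ξ z = ξ (b i) → s * η (b i) < s * η z}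

theorem isOpen_slit {m : ℕ} (b : Fin m → ℂ) (ξ η : ℂ →L[ℝ] ℝ) (s : ℝ) :
    IsOpen (slit b ξ η s) := by
  have : slit b ξ η s = ⋂ i, {z | ξ z ≠ ξ (b i)} ∪ {z | s * η (b i) < s * η z} := by
    ext z; simp [slit, imp_iff_not_or]
  rw [this]
  refine isOpen_iInter_of_finite fun i => IsOpen.union ?_ ?_
  · exact isOpen_ne_fun (by fun_prop) (by fun_prop)
  · exact isOpen_lt (by fun_prop) (by fun_prop)

theorem isSimplyConnected_slit {m : ℕ} (b : Fin m → ℂ) (ξ η : ℂ →L[ℝ] ℝ) (d : ℂ) (hξ : ξ d = 0)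
    (hη : η d = 1) (s : ℝ) (hs : s * s = 1) : IsSimplyConnected (slit b ξ η s) := by
  obtain ⟨M, hM⟩ := (Set.finite_range fun i => s * η (b i)).bddAbove
  refine isSimplyConnected_of_ray _ (s • η) (s • d) ?_ (M + 1) ?_ ?_
  · rw [smul_apply, map_smul, hη]; simpa using hs
  · intro z hz r hr i hi
    have h1 : ξ z = ξ (b i) := by
      rw [← hi, map_add, map_smul, map_smul, hξ]; simp
    have h2 := hz i h1
    rw [map_add, map_smul, map_smul, hη]
    simp only [smul_eq_mul]
    nlinarith
  · intro z hz i _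
    have h1 : s * η (b i) ≤ M := hM ⟨i, rfl⟩
    have h2 : M + 1 ≤ s * η z := hz
    linarith

theorem isSimplyConnected_fib_slit {m : ℕ} (b : Fin m → ℂ) (ξ η : ℂ →L[ℝ] ℝ) (d : ℂ)
    (hξ : ξ d = 0) (hη : η d = 1) (s : ℝ) (hs : s * s = 1) :
    IsSimplyConnected {z : Fib b | z.1 ∈ slit b ξ η s} := by
  rw [← (Topology.IsEmbedding.subtypeVal (p := fun z : ℂ => ∀ i, z ≠ b i)).isSimplyConnected_image]
  have : Subtype.val '' {z : Fib b | z.1 ∈ slit b ξ η s} = slit b ξ η s := by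
    ext z
    constructor
    · rintro ⟨w, hw, rfl⟩; exact hw
    · intro hz
      refine ⟨⟨z, ?_⟩, hz, rfl⟩
      rintro i rfl
      exact lt_irrefl _ (hz i rfl)
  rw [this]
  exact isSimplyConnected_slit b ξ η d hξ hη s hs

/-- number of points to the left -/
noncomputable def leftCount {m : ℕ} (u : Fin m → ℝ) (x : ℝ) : Fin (m + 1) :=
  ⟨(Finset.univ.filter fun i => u i < x).card, by
    have := Finset.card_filter_le (Finset.univ : Finset (Fin m)) (fun i => u i < x)
    simp only [Finset.card_univ, Fintype.card_fin] at this
    omega⟩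

theorem leftCount_congr {m : ℕ} (u : Fin m → ℝ) {x y : ℝ} (h : leftCount u x = leftCount u y)
    (i : Fin m) : u i < x ↔ u i < y := by
  have h' : (Finset.univ.filter fun i => u i < x).card = (Finset.univ.filter fun i => u i < y).card :=
    congrArg Fin.val h
  wlog hxy : x ≤ y generalizing x y
  · exact (this h.symm h'.symm (le_of_not_ge hxy)).symm
  have h1 := Finset.eq_of_subset_of_card_le (s := Finset.univ.filter fun i => u i < x)
    (t := Finset.univ.filter fun i => u i < y)
    (fun j hj => by simp only [Finset.mem_filter] at *; exact ⟨hj.1, hj.2.trans_le hxy⟩) h'.ge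
  simpa using Finset.ext_iff.1 h1 i

theorem exists_leftCount {m : ℕ} (u : Fin m → ℝ) (hu : Function.Injective u) (k : Fin (m + 1)) :
    ∃ x, (∀ i, x ≠ u i) ∧ leftCount u x = k := by
  let π := Tuple.sort u
  have hmono : StrictMono (u ∘ π) :=
    (Tuple.monotone_sort u).strictMono_of_injective (hu.comp π.injective)
  obtain ⟨x, h1, h2⟩ := Order.exists_between_finsets
    ((Finset.univ.filter fun i : Fin m => i.val < k.val).image (u ∘ π))
    ((Finset.univ.filter fun i : Fin m => ¬ i.val < k.val).image (u ∘ π)) (by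
      intro a ha b hb
      simp only [Finset.mem_image, Finset.mem_filter, Finset.mem_univ, true_and] at ha hb
      obtain ⟨i, hi, rfl⟩ := ha
      obtain ⟨j, hj, rfl⟩ := hb
      apply hmono
      rw [Fin.lt_def]; omega)
  have h1' : ∀ i : Fin m, i.val < k.val → u (π i) < x := fun i hi =>
    h1 _ (Finset.mem_image.2 ⟨i, by simpa using hi, rfl⟩)
  have h2' : ∀ i : Fin m, ¬ i.val < k.val → x < u (π i) := fun i hi =>
    h2 _ (Finset.mem_image.2 ⟨i, by simpa using hi, rfl⟩)
  refine ⟨x, ?_, ?_⟩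
  · intro i
    obtain ⟨j, rfl⟩ := π.surjective i
    by_cases hj : j.val < k.val
    · exact (h1' j hj).ne'
    · exact (h2' j hj).ne
  · apply Fin.ext
    change (Finset.univ.filter fun i => u i < x).card = k.val
    have h3 : (Finset.univ.filter fun i => u i < x).card
        = (Finset.univ.filter fun i : Fin m => i.val < k.val).card := by
      symm
      refine Finset.card_equiv π fun i => ?_
      simp only [Finset.mem_filter, Finset.mem_univ, true_and]
      by_cases hi : i.val < k.val
      · simp [hi, h1' i hi]
      · simp [hi, (h2' i hi).le]
    rw [h3, Fin.card_filter_val_lt]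
    omega

theorem free_fib_aux {m : ℕ} (b : Fin m → ℂ) (ξ η : ℂ →L[ℝ] ℝ) (d e : ℂ)
    (hξ : ξ d = 0) (hη : η d = 1) (he : ξ e = 1)
    (hsep : ∀ w w', ξ w = ξ w' → η w = η w' → w = w') (hb : Function.Injective fun i => ξ (b i)) :
    ∃ y : Fib b, Nonempty (FreeGroup (Fin m) ≃* FundamentalGroup (Fib b) y) := by
  let u : Fin m → ℝ := fun i => ξ (b i)
  let U : Set (Fib b) := {z | z.1 ∈ slit b ξ η 1}
  let V : Set (Fib b) := {z | z.1 ∈ slit b ξ η (-1)}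
  have hUV : ∀ z : Fib b, z ∈ U ∩ V ↔ ∀ i, ξ z.1 ≠ u i := by
    intro z
    constructor
    · rintro ⟨h1, h2⟩ i hi
      have h3 := h1 i hi
      have h4 := h2 i hi
      linarith
    · intro h
      exact ⟨fun i hi => absurd hi (h i), fun i hi => absurd hi (h i)⟩
  choose x hx1 hx2 using exists_leftCount u hb
  have hxe : ∀ k, ξ (x k • e) = x k := fun k => by rw [map_smul, he]; simp
  let y : Fin (m + 1) → Fib b := fun k => ⟨x k • e, fun i h => hx1 k i (by rw [← hxe, h])⟩
  refine ⟨y 0, free_of_cover U V ?_ ?_ ?_ ?_ ?_ (fun z => leftCount u (ξ z.1)) ?_ ?_ y ?_ ?_⟩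
  · exact (isOpen_slit b ξ η 1).preimage continuous_subtype_val
  · exact (isOpen_slit b ξ η (-1)).preimage continuous_subtype_val
  · rw [Set.eq_univ_iff_forall]
    intro z
    by_cases h : ∀ i, ξ z.1 ≠ u i
    · exact Or.inl ((hUV z).2 h).1
    · push Not at h
      obtain ⟨i, hi⟩ := h
      have huniq : ∀ j, ξ z.1 = ξ (b j) → j = i := fun j hj => hb (hj.symm.trans hi)
      have hne : η z.1 ≠ η (b i) := by
        intro h
        exact z.2 i (hsep _ _ hi h)
      rcases lt_or_gt_of_ne hne with h | h
      · refine Or.inr fun j hj => ?_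
        rw [huniq j hj]; linarith
      · refine Or.inl fun j hj => ?_
        rw [huniq j hj]; linarith
  · exact isSimplyConnected_fib_slit b ξ η d hξ hη 1 (by norm_num)
  · exact isSimplyConnected_fib_slit b ξ η d hξ hη (-1) (by norm_num)
  · intro z hz
    apply ContinuousAt.continuousWithinAt
    have hz' := (hUV z).1 hz
    have hcont : Continuous fun w : Fib b => ξ w.1 := by fun_prop
    have hev : ∀ᶠ w : Fib b in 𝓝 z, ∀ i, (u i < ξ w.1 ↔ u i < ξ z.1) := by
      rw [Filter.eventually_all]
      intro i
      rcases lt_or_gt_of_ne (hz' i) with h | h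
      · filter_upwards [hcont.continuousAt.eventually_lt continuousAt_const h] with w hw
        exact ⟨fun h' => absurd h' (not_lt.2 hw.le), fun h' => absurd h' (not_lt.2 h.le)⟩
      · filter_upwards [continuousAt_const.eventually_lt hcont.continuousAt h] with w hw
        exact ⟨fun _ => h, fun _ => hw⟩
    refine ContinuousAt.congr (f := fun _ => leftCount u (ξ z.1)) continuousAt_const ?_
    filter_upwards [hev] with w hw
    simp only [leftCount, hw]
  · intro z hz w hw h
    have h1 := leftCount_congr u h
    rw [hUV] at hz hw
    have key : ∀ t : I, ∀ i, ξ ((1 - (t : ℝ)) • z.1 + (t : ℝ) • w.1) ≠ u i := by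
      intro t i
      have h3 := h1 i
      have h4 := hz i
      have h5 := hw i
      have h6 := t.2.1
      have h7 := t.2.2
      simp only [map_add, map_smul, smul_eq_mul]
      rcases lt_or_gt_of_ne h4 with h8 | h8
      · have h9 : ξ w.1 < u i := by
          rcases lt_or_gt_of_ne h5 with h | h
          · exact h
          · exact absurd (h3.2 h) (not_lt.2 h8.le)
        apply ne_of_lt
        nlinarith [mul_nonneg h6 (sub_nonneg.2 h9.le), mul_nonneg (sub_nonneg.2 h7) (sub_nonneg.2 h8.le)]
      · have h9 := h3.1 h8
        apply ne_of_gt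
        nlinarith [mul_nonneg h6 (sub_nonneg.2 h9.le), mul_nonneg (sub_nonneg.2 h7) (sub_nonneg.2 h8.le)]
    refine ⟨{ toFun := fun t => ⟨(1 - (t : ℝ)) • z.1 + (t : ℝ) • w.1,
                fun i hi => key t i (by rw [hi])⟩
              continuous_toFun := by fun_prop
              source' := by simp
              target' := by simp }, fun t => ?_⟩
    rw [hUV]
    exact key t
  · intro k
    rw [hUV]
    intro i
    change ξ (x k • e) ≠ _
    rw [hxe]
    exact hx1 k i
  · intro k
    change leftCount u (ξ (x k • e)) = k
    rw [hxe, hx2]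

theorem fib_pathConnected {m : ℕ} (b : Fin m → ℂ) : PathConnectedSpace (Fib b) := by
  have h := (Set.finite_range b).countable.isPathConnected_compl_of_one_lt_rank
    (E := ℂ) (by rw [Complex.rank_real_complex]; norm_num)
  have h2 : (Set.range b)ᶜ = {z | ∀ i, z ≠ b i} := by
    ext z; simp [eq_comm]
  rw [h2] at h
  exact isPathConnected_iff_pathConnectedSpace.1 h

theorem exists_generic {m : ℕ} (b : Fin m → ℂ) (hb : Function.Injective b) :
    ∃ t : ℝ, Function.Injective fun i => (b i).re + t * (b i).im := by
  obtain ⟨t, -, ht⟩ := (Set.infinite_univ (α := ℝ)).exists_notMem_finset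
    (Finset.univ.image fun p : Fin m × Fin m =>
      -((b p.1).re - (b p.2).re) / ((b p.1).im - (b p.2).im))
  refine ⟨t, fun i j hij => ?_⟩
  by_contra hne
  simp only at hij
  by_cases him : (b i).im = (b j).im
  · apply hne
    apply hb
    refine Complex.ext ?_ him
    rw [him] at hij
    linarith
  · apply ht
    refine Finset.mem_image.2 ⟨(i, j), Finset.mem_univ _, ?_⟩
    have : (b i).im - (b j).im ≠ 0 := sub_ne_zero.2 him
    simp only
    field_simp
    linarith

theorem free_fib {m : ℕ} (b : Fin m → ℂ) (hb : Function.Injective b) (y : Fib b) :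
    Nonempty (FreeGroup (Fin m) ≃* FundamentalGroup (Fib b) y) := by
  obtain ⟨t, ht⟩ := exists_generic b hb
  have := fib_pathConnected b
  obtain ⟨y', ⟨e⟩⟩ := free_fib_aux b (Complex.reCLM + t • Complex.imCLM) Complex.imCLM
    (-(t : ℂ) + Complex.I) 1 (by simp) (by simp) (by simp) (by
      intro w w' h1 h2
      simp only [add_apply, smul_apply,
        Complex.reCLM_apply, Complex.imCLM_apply, smul_eq_mul] at h1 h2
      refine Complex.ext ?_ h2
      rw [h2] at h1
      linarith) (by simpa using ht)
  exact ⟨e.trans (FundamentalGroup.fundamentalGroupMulEquivOfPathConnected y' y)⟩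


theorem homotopic_of_square {X : Type*} [TopologicalSpace X] {x y : X} (p q : Path x y)
    (K : I → I → X) (hK : Continuous fun a : I × I => K a.1 a.2) (h0 : ∀ u, K 0 u = p u)
    (h1 : ∀ u, K 1 u = q u) (hs : ∀ v, K v 0 = x) (ht : ∀ v, K v 1 = y) : p.Homotopic q :=
  ⟨{ toFun := fun a => K a.1 a.2
     continuous_toFun := hK
     map_zero_left := h0
     map_one_left := h1
     prop' := by
      intro t u hu
      rcases hu with rfl | hu
      · change K t 0 = p 0
        rw [hs, p.source]
      · rw [Set.mem_singleton_iff] at hu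
        subst hu
        change K t 1 = p 1
        rw [ht, p.target] }⟩

theorem commute_of_square {X : Type*} [TopologicalSpace X] {x : X} (p q : Path x x)
    (K : I → I → X) (hK : Continuous fun a : I × I => K a.1 a.2) (h0 : ∀ u, K 0 u = q u)
    (h1 : ∀ u, K 1 u = q u) (hs : ∀ v, K v 0 = p v) (ht : ∀ v, K v 1 = p v) :
    (Path.Homotopic.Quotient.mk p).trans (.mk q) = (Path.Homotopic.Quotient.mk q).trans (.mk p) := by
  let i : Path (0 : I) 1 := ⟨⟨id, continuous_id⟩, rfl, rfl⟩
  let Q : C(I × I, X) := ⟨fun a => K a.1 a.2, hK⟩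
  have e1 : p.trans q = (((i.prod (Path.refl 0)).trans ((Path.refl 1).prod i)).map Q.continuous).cast
      (by change x = K 0 0; rw [hs, p.source]) (by change x = K 1 1; rw [ht, p.target]) := by
    rw [Path.map_trans]
    ext t
    simp only [Path.cast_coe, Path.trans_apply]
    split_ifs
    · exact (hs _).symm
    · exact (h1 _).symm
  have e2 : q.trans p = ((((Path.refl 0).prod i).trans (i.prod (Path.refl 1))).map Q.continuous).cast
      (by change x = K 0 0; rw [hs, p.source]) (by change x = K 1 1; rw [ht, p.target]) := by
    rw [Path.map_trans]
    ext t
    simp only [Path.cast_coe, Path.trans_apply]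
    split_ifs
    · exact (h0 _).symm
    · exact (ht _).symm
  have e3 : ((i.prod (Path.refl 0)).trans ((Path.refl 1).prod i)).Homotopic
      (((Path.refl 0).prod i).trans (i.prod (Path.refl 1))) := by
    rw [Path.trans_prod_eq_prod_trans, Path.trans_prod_eq_prod_trans]
    have a1 : (i.trans (Path.refl 1)).Homotopic ((Path.refl 0).trans i) :=
      ⟨(Path.Homotopy.transRefl i).trans (Path.Homotopy.reflTrans i).symm⟩
    obtain ⟨a⟩ := a1
    exact ⟨Path.Homotopic.prodHomotopy a a.symm⟩
  rw [← Path.Homotopic.Quotient.mk_trans, ← Path.Homotopic.Quotient.mk_trans,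
    Path.Homotopic.Quotient.eq, e1, e2]
  obtain ⟨a⟩ := e3
  exact ⟨(a.map Q).pathCast _ _⟩

/-- Ordered configuration space. -/
abbrev Conf (n : ℕ) : Type := {f : Fin n → ℂ // Function.Injective f}

theorem continuous_coord {A : Type*} [TopologicalSpace A] {n : ℕ} {f : A → Conf n}
    (hf : Continuous f) (i : Fin n) : Continuous fun a => (f a).1 i :=
  (continuous_apply i).comp (continuous_subtype_val.comp hf)

/-- Forget the first point. -/
def proj (m : ℕ) : C(Conf (m + 1), Conf m) :=
  ⟨fun f => ⟨fun i => f.1 i.succ, fun _ _ h => Fin.succ_injective _ (f.2 h)⟩,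
    Continuous.subtype_mk (continuous_pi fun i : Fin m =>
      continuous_coord continuous_id (Fin.succ i)) _⟩

/-- Add a first point. -/
def addPt {m : ℕ} (b : Conf m) (z : ℂ) (hz : ∀ i, z ≠ b.1 i) : Conf (m + 1) :=
  ⟨Fin.cons z b.1, Fin.cons_injective_iff.2 ⟨fun ⟨i, hi⟩ => hz i hi.symm, b.2⟩⟩

theorem addPt_proj {m : ℕ} (f : Conf (m + 1)) (h) : addPt (proj m f) (f.1 0) h = f :=
  Subtype.ext (Fin.cons_self_tail f.1)

theorem addPt_congr {m : ℕ} {b b' : Conf m} {z z' : ℂ} (h) (h') (hb : b = b') (hz : z = z') :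
    addPt b z h = addPt b' z' h' := by
  subst hb hz; rfl

theorem zero_ne {m : ℕ} (f : Conf (m + 1)) (i : Fin m) : f.1 0 ≠ (proj m f).1 i :=
  fun h => (Fin.succ_ne_zero i) (f.2 h).symm

theorem continuous_addPt {A : Type*} [TopologicalSpace A] {m : ℕ} {b : A → Conf m} {z : A → ℂ}
    (hb : Continuous b) (hz : Continuous z) (h : ∀ a i, z a ≠ (b a).1 i) :
    Continuous fun a => addPt (b a) (z a) (h a) := by
  refine Continuous.subtype_mk (continuous_pi fun i => ?_) _
  refine Fin.cases ?_ (fun i => ?_) i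
  · exact hz
  · exact continuous_coord hb i

/-- Inclusion of the fibre. -/
def incl {m : ℕ} (b : Conf m) : C(Fib b.1, Conf (m + 1)) :=
  ⟨fun z => addPt b z.1 z.2, continuous_addPt continuous_const continuous_subtype_val _⟩

theorem proj_incl {m : ℕ} (b : Conf m) (z : Fib b.1) : proj m (incl b z) = b := rfl

theorem exists_incl {m : ℕ} (f : Conf (m + 1)) : ∃ b : Conf m, ∃ y : Fib b.1, incl b y = f :=
  ⟨proj m f, ⟨f.1 0, zero_ne f⟩, addPt_proj f (zero_ne f)⟩

variable {m : ℕ} (b : Conf m) (y : Fib b.1)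

theorem lift_loop (γ : Path b b) :
    ∃ γ' : Path (incl b y) (incl b y), Path.Homotopic (γ'.map (proj m).continuous) γ := by
  obtain ⟨T, hT, hinj, hend, hconst⟩ := exists_transport (A := I) (fun u t => (γ (u * t)).1)
    (by fun_prop) (fun u t => (γ _).2)
  have h1 : ∀ u i, T u (b.1 i) = (γ u).1 i := by
    intro u i
    simpa using hend u i
  have h2 : ∀ u i, T u y.1 ≠ (γ u).1 i := by
    intro u i h
    rw [← h1] at h
    exact y.2 i (hinj u h)
  have h3 : ∀ i, T 1 y.1 ≠ b.1 i := by
    intro i; simpa using h2 1 i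
  have h4 : T 0 y.1 = y.1 := hconst 0 (by simp) _
  let y' : Fib b.1 := ⟨T 1 y.1, h3⟩
  let L : Path (incl b y) (incl b y') :=
    { toFun := fun u => addPt (γ u) (T u y.1) (h2 u)
      continuous_toFun := continuous_addPt γ.continuous
        (hT.comp (continuous_id.prodMk continuous_const)) _
      source' := addPt_congr (h2 0) y.2 γ.source h4
      target' := addPt_congr (h2 1) h3 γ.target rfl }
  have := fib_pathConnected b.1
  let δ : Path y' y := PathConnectedSpace.somePath y' y
  refine ⟨L.trans (δ.map (incl b).continuous), ?_⟩
  rw [Path.map_trans]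
  have e1 : L.map (proj m).continuous = γ := by ext t; rfl
  have e2 : (δ.map (incl b).continuous).map (proj m).continuous = Path.refl b := by ext t; rfl
  have e3 : ((L.map (proj m).continuous).trans
      ((δ.map (incl b).continuous).map (proj m).continuous) : Path b b) = γ.trans (Path.refl b) :=
    congrArg₂ Path.trans e1 e2
  have e4 : ((γ.trans (Path.refl b)) : Path b b).Homotopic γ := ⟨Path.Homotopy.transRefl γ⟩
  rw [← e3] at e4
  exact e4

theorem exact_loop (γ : Path (incl b y) (incl b y))
    (h : Path.Homotopic (X := Conf m) (x₀ := b) (x₁ := b) (γ.map (proj m).continuous) (Path.refl b)) :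
    ∃ α : Path y y, Path.Homotopic (α.map (incl b).continuous) γ := by
  obtain ⟨H⟩ := h
  have hH0 : ∀ u, H (0, u) = proj m (γ u) := fun u => H.apply_zero u
  have hH1 : ∀ u, H (1, u) = b := fun u => H.apply_one u
  have hHs : ∀ v, H (v, 0) = b := fun v => H.source v
  have hHt : ∀ v, H (v, 1) = b := fun v => H.target v
  have hHc : Continuous H := H.continuous
  obtain ⟨T, hT, hinj, hend, hconst⟩ := exists_transport (A := I × I)
    (fun a t => (H (a.1 * t, a.2)).1) (by fun_prop) (fun u t => (H _).2)
  have h1 : ∀ v u i, T (v, u) ((proj m (γ u)).1 i) = (H (v, u)).1 i := by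
    intro v u i
    have := hend (v, u) i
    simp only [mul_zero, mul_one, hH0] at this
    exact this
  have h2 : ∀ v u i, T (v, u) ((γ u).1 0) ≠ (H (v, u)).1 i := by
    intro v u i h
    rw [← h1] at h
    exact zero_ne _ i (hinj _ h)
  have hγ0 : (γ 0).1 0 = y.1 := by rw [γ.source]; rfl
  have hγ1 : (γ 1).1 0 = y.1 := by rw [γ.target]; rfl
  have c0 : ∀ v z, T (v, 0) z = z := fun v z => hconst (v, 0) (by simp [hHs]) z
  have c1 : ∀ v z, T (v, 1) z = z := fun v z => hconst (v, 1) (by simp [hHt]) z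
  have cz : ∀ u z, T (0, u) z = z := fun u z => hconst (0, u) (by simp) z
  have hγ0c : Continuous fun u => (γ u).1 0 := continuous_coord γ.continuous 0
  let α : Path y y :=
    { toFun := fun u => ⟨T (1, u) ((γ u).1 0), fun i => by simpa only [hH1] using h2 1 u i⟩
      continuous_toFun := Continuous.subtype_mk
        (hT.comp ((continuous_const.prodMk continuous_id).prodMk hγ0c)) _
      source' := Subtype.ext (by simp only [c0, hγ0])
      target' := Subtype.ext (by simp only [c1, hγ1]) }
  refine ⟨α, Path.Homotopic.symm ?_⟩
  refine homotopic_of_square _ _ (fun v u => addPt (H (v, u)) (T (v, u) ((γ u).1 0)) (h2 v u))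
    ?_ ?_ ?_ ?_ ?_
  · exact continuous_addPt hHc (hT.comp (continuous_id.prodMk (hγ0c.comp continuous_snd))) _
  · intro u
    exact (addPt_congr _ (zero_ne _) (hH0 u) (cz u _)).trans (addPt_proj _ _)
  · intro u
    exact addPt_congr _ (α u).2 (hH1 u) rfl
  · intro v
    exact addPt_congr _ y.2 (hHs v) (by rw [c0, hγ0])
  · intro v
    exact addPt_congr _ y.2 (hHt v) (by rw [c1, hγ1])

theorem central_loop (α : Path y y)
    (h : Path.Homotopic (α.map (incl b).continuous) (Path.refl (incl b y))) (β : Path y y) :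
    (Path.Homotopic.Quotient.mk α).trans (.mk β) = (Path.Homotopic.Quotient.mk β).trans (.mk α) := by
  obtain ⟨H⟩ := h
  have hH0 : ∀ u, H (0, u) = incl b (α u) := fun u => H.apply_zero u
  have hH1 : ∀ u, H (1, u) = incl b y := fun u => H.apply_one u
  have hHs : ∀ v, H (v, 0) = incl b y := fun v => H.source v
  have hHt : ∀ v, H (v, 1) = incl b y := fun v => H.target v
  have hHc : Continuous H := H.continuous
  obtain ⟨T, hT, hinj, hend, hconst⟩ := exists_transport (A := I × I)
    (fun a t => (proj m (H (a.1 * σ t, a.2))).1)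
    (continuous_subtype_val.comp ((proj m).continuous.comp (hHc.comp (by fun_prop)))) (fun u t => (proj m (H _)).2)
  have h1 : ∀ v u i, T (v, u) ((proj m (H (v, u))).1 i) = b.1 i := by
    intro v u i
    have := hend (v, u) i
    simp only [unitInterval.symm_zero, unitInterval.symm_one, mul_zero, mul_one, hH0] at this
    exact this
  have h2 : ∀ v u i, T (v, u) ((H (v, u)).1 0) ≠ b.1 i := by
    intro v u i h
    rw [← h1 v u] at h
    exact zero_ne _ i (hinj _ h)
  have h3 : ∀ u (z : Fib b.1) i, T (1, u) z.1 ≠ b.1 i := by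
    intro u z i h
    rw [← h1 1 u, hH1] at h
    exact z.2 i (hinj _ h)
  have c0 : ∀ v z, T (v, 0) z = z := fun v z => hconst (v, 0) (by simp [hHs]) z
  have c1 : ∀ v z, T (v, 1) z = z := fun v z => hconst (v, 1) (by simp [hHt]) z
  have cz : ∀ u z, T (0, u) z = z := fun u z => hconst (0, u) (by simp) z
  let S : I → Fib b.1 → Fib b.1 := fun u z => ⟨T (1, u) z.1, h3 u z⟩
  have hS : Continuous fun a : I × Fib b.1 => S a.1 a.2 := by
    refine Continuous.subtype_mk (hT.comp
      ((continuous_const.prodMk continuous_fst).prodMk (continuous_subtype_val.comp continuous_snd))) _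
  have hS0 : ∀ z, S 0 z = z := fun z => Subtype.ext (c0 _ _)
  have hS1 : ∀ z, S 1 z = z := fun z => Subtype.ext (c1 _ _)
  let α' : Path y y :=
    { toFun := fun u => S u y
      continuous_toFun := hS.comp (continuous_id.prodMk continuous_const)
      source' := hS0 y
      target' := hS1 y }
  have e1 : Path.Homotopic.Quotient.mk α = Path.Homotopic.Quotient.mk α' := by
    rw [Path.Homotopic.Quotient.eq]
    refine homotopic_of_square _ _ (fun v u => ⟨T (v, u) ((H (v, u)).1 0), h2 v u⟩) ?_ ?_ ?_ ?_ ?_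
    · refine Continuous.subtype_mk (hT.comp (continuous_id.prodMk ?_)) _
      exact continuous_coord hHc 0
    · intro u
      refine Subtype.ext ?_
      simp only [cz, hH0]
      rfl
    · intro u
      refine Subtype.ext ?_
      simp only [hH1]
      rfl
    · intro v
      refine Subtype.ext ?_
      simp only [c0, hHs]
      rfl
    · intro v
      refine Subtype.ext ?_
      simp only [c1, hHt]
      rfl
  rw [e1]
  refine commute_of_square α' β (fun u s => S u (β s)) ?_ ?_ ?_ ?_ ?_
  · exact hS.comp (continuous_fst.prodMk (β.continuous.comp continuous_snd))
  · intro u; exact hS0 _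
  · intro u; exact hS1 _
  · intro v
    change S v (β 0) = S v y
    rw [β.source]
  · intro v
    change S v (β 1) = S v y
    rw [β.target]


theorem incl_injective_of_two {m : ℕ} (b : Conf m) (y : Fib b.1) (hm : 2 ≤ m)
    (g : FundamentalGroup (Fib b.1) y) (hg : FundamentalGroup.map (incl b) y g = 1) : g = 1 := by
  obtain ⟨α, rfl⟩ := Path.Homotopic.Quotient.mk_surjective g
  have h : Path.Homotopic (α.map (incl b).continuous) (Path.refl (incl b y)) :=
    Path.Homotopic.Quotient.eq.1 hg
  obtain ⟨e⟩ := free_fib b.1 b.2 y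
  have : Nontrivial (Fin m) := Fin.nontrivial_iff_two_le.2 hm
  obtain ⟨a, ha⟩ : ∃ a : FundamentalGroup (Fib b.1) y, a = Path.Homotopic.Quotient.mk α := ⟨_, rfl⟩
  have hc : ∀ k : FundamentalGroup (Fib b.1) y, k * a = a * k := by
    intro k
    rw [ha]
    obtain ⟨β, rfl⟩ := Path.Homotopic.Quotient.mk_surjective k
    exact central_loop b y α h β
  have h1 := freeGroup_center (e.symm a) (fun v => by
    apply e.injective
    rw [map_mul, map_mul, e.apply_symm_apply]
    exact hc _)
  rw [← ha]
  exact (map_eq_one_iff e.symm e.symm.injective).1 h1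

theorem incl_injective_of_one (b : Conf 1) (y : Fib b.1)
    (g : FundamentalGroup (Fib b.1) y) (hg : FundamentalGroup.map (incl b) y g = 1) : g = 1 := by
  obtain ⟨α, rfl⟩ := Path.Homotopic.Quotient.mk_surjective g
  have h : Path.Homotopic (α.map (incl b).continuous) (Path.refl (incl b y)) :=
    Path.Homotopic.Quotient.eq.1 hg
  have hne : ∀ (f : Conf 2) (i : Fin 1), f.1 0 - f.1 1 + b.1 0 ≠ b.1 i := by
    intro f i hi
    rw [Subsingleton.elim i 0] at hi
    have : f.1 0 = f.1 1 := by linear_combination hi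
    exact absurd (f.2 this) (by decide)
  have hcont : Continuous fun f : Conf 2 => f.1 0 - f.1 1 + b.1 0 :=
    ((continuous_coord continuous_id 0).sub (continuous_coord continuous_id 1)).add continuous_const
  let r : C(Conf 2, Fib b.1) := ⟨fun f => ⟨f.1 0 - f.1 1 + b.1 0, hne f⟩, hcont.subtype_mk hne⟩
  have hr : ∀ z, r (incl b z) = z := by
    intro z
    refine Subtype.ext ?_
    change z.1 - b.1 0 + b.1 0 = z.1
    ring
  have h2 := h.map r
  refine Path.Homotopic.Quotient.eq.2 ?_
  obtain ⟨K⟩ := h2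
  refine homotopic_of_square _ _ (fun v u => K (v, u)) K.continuous ?_ ?_ ?_ ?_
  · intro u; exact (K.apply_zero u).trans (hr _)
  · intro u; exact (K.apply_one u).trans (hr _)
  · intro v; exact (K.source v).trans (hr _)
  · intro v; exact (K.target v).trans (hr _)

theorem incl_injective {m : ℕ} (b : Conf m) (y : Fib b.1) :
    Function.Injective (FundamentalGroup.map (incl b) y) := by
  rw [injective_iff_map_eq_one]
  intro g hg
  rcases lt_or_ge m 2 with hm | hm
  · interval_cases m
    · obtain ⟨e⟩ := free_fib b.1 b.2 y
      exact e.symm.injective (Subsingleton.elim _ _)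
    · exact incl_injective_of_one b y g hg
  · exact incl_injective_of_two b y hm g hg

theorem hasFilt_conf (n : ℕ) : ∀ x : Conf n, HasFilt (FundamentalGroup (Conf n) x) n := by
  induction n with
  | zero =>
    intro x
    have h0 : Subsingleton (Conf 0) := ⟨fun a b => Subtype.ext (Subsingleton.elim _ _)⟩
    have h1 : Subsingleton (FundamentalGroup (Conf 0) x) := by
      constructor
      intro p q
      obtain ⟨p, rfl⟩ := Path.Homotopic.Quotient.mk_surjective p
      obtain ⟨q, rfl⟩ := Path.Homotopic.Quotient.mk_surjective q
      exact congrArg Path.Homotopic.Quotient.mk (Path.ext (funext fun t => Subsingleton.elim _ _))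
    exact HasFilt.of_subsingleton
  | succ m ih =>
    intro x
    obtain ⟨b, y, rfl⟩ := exists_incl x
    obtain ⟨e⟩ := free_fib b.1 b.2 y
    refine HasFilt.step (FundamentalGroup.map (proj m) (incl b y)) ?_ (ih b)
      ((FundamentalGroup.map (incl b) y).comp e.toMonoidHom) ?_ ?_
    · intro q
      obtain ⟨γ, rfl⟩ := Path.Homotopic.Quotient.mk_surjective q
      obtain ⟨γ', h⟩ := lift_loop b y γ
      exact ⟨Path.Homotopic.Quotient.mk γ', Path.Homotopic.Quotient.eq.2 h⟩
    · exact (incl_injective b y).comp e.injective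
    · ext g
      rw [MonoidHom.mem_ker]
      constructor
      · rintro ⟨w, rfl⟩
        obtain ⟨α, hα⟩ := Path.Homotopic.Quotient.mk_surjective (e w)
        change FundamentalGroup.map (proj m) (incl b y) (FundamentalGroup.map (incl b) y (e w)) = 1
        rw [← hα]
        exact congrArg Path.Homotopic.Quotient.mk (Path.ext (funext fun t => rfl) :
          ((α.map (incl b).continuous).map (proj m).continuous : Path b b) = Path.refl b)
      · intro hg
        obtain ⟨γ, rfl⟩ := Path.Homotopic.Quotient.mk_surjective g
        obtain ⟨α, h⟩ := exact_loop b y γ (Path.Homotopic.Quotient.eq.1 hg)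
        refine ⟨e.symm (Path.Homotopic.Quotient.mk α), ?_⟩
        change FundamentalGroup.map (incl b) y (e (e.symm (Path.Homotopic.Quotient.mk α))) = _
        rw [e.apply_symm_apply]
        exact Path.Homotopic.Quotient.eq.2 h

end PureBraid

/-- The pure braid group on `n ≥ 1` strands, i.e. the fundamental group of the
ordered configuration space of `n` points in `ℂ`, admits a filtration
`1 = G₀ ≤ G₁ ≤ ⋯ ≤ Gₙ = P` by normal subgroups of `P` whose successive quotients are
finitely generated free groups (the quotient `G_{i+1}/Gᵢ` is expressed by a surjection
`G_{i+1} → FreeGroup (Fin k)` with kernel `Gᵢ`). -/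
theorem pureBraidGroup_stronglyPolyFree_filtration (n : ℕ) (hn : 1 ≤ n)
    (x : {f : Fin n → ℂ // Function.Injective f}) :
    ∃ G : Fin (n + 1) →
        Subgroup (FundamentalGroup {f : Fin n → ℂ // Function.Injective f} x),
      G 0 = ⊥ ∧ G (Fin.last n) = ⊤ ∧
      (∀ i, (G i).Normal) ∧
      (∀ i : Fin n, G i.castSucc ≤ G i.succ) ∧
      (∀ i : Fin n, ∃ (k : ℕ) (ψ : (G i.succ) →* FreeGroup (Fin k)),
        Function.Surjective ψ ∧
        ∀ g : G i.succ, ψ g = 1 ↔ (g : FundamentalGroup _ x) ∈ G i.castSucc) := by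
  exact PureBraid.hasFilt_conf n x
end

section
/- Let n ≥ 1, let Conf_n(ℂ) = {f : Fin n → ℂ | f injective} be the ordered configuration space of n points in ℂ, and let the symmetric group S_n = Perm(Fin n) act on Conf_n(ℂ) by σ • f = f ∘ σ⁻¹. Let UConf_n(ℂ) be the orbit space Conf_n(ℂ)/S_n with the quotient topology, let x ∈ Conf_n(ℂ) and let q ∈ UConf_n(ℂ) be the image of x. Then there exists a surjective group homomorphism φ : π₁(UConf_n(ℂ), q) → Perm(Fin n) whose kernel is isomorphic to π₁(Conf_n(ℂ), x). In other words, there is a short exact sequence 1 → B_n(ℂ) → FB_n(ℂ) → S_n → 1 relating the pure braid group B_n(ℂ) and the full braid group FB_n(ℂ). -/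
/-- The ordered configuration space of `n` points in `ℂ`. -/
abbrev ComplexConf (n : ℕ) : Type := {f : Fin n → ℂ // Function.Injective f}

instance complexConfPermSMul (n : ℕ) : SMul (Equiv.Perm (Fin n)) (ComplexConf n) :=
  ⟨fun σ f => ⟨fun i => f.1 (σ⁻¹ i), f.2.comp (Equiv.injective _)⟩⟩

/-- The symmetric group `Sₙ` acts on the configuration space by `σ • f = f ∘ σ⁻¹`. -/
instance complexConfPermAction (n : ℕ) :
    MulAction (Equiv.Perm (Fin n)) (ComplexConf n) where
  one_smul f := Subtype.ext (funext fun i =>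
    show f.1 ((1 : Equiv.Perm (Fin n))⁻¹ i) = f.1 i by simp)
  mul_smul σ τ f := Subtype.ext (funext fun i =>
    show f.1 ((σ * τ)⁻¹ i) = f.1 (τ⁻¹ (σ⁻¹ i)) by simp [mul_inv_rev])

/-- The unordered configuration space: the orbit space `Confₙ(ℂ)/Sₙ`, with the quotient
topology. -/
abbrev ComplexUConf (n : ℕ) : Type :=
  Quotient (MulAction.orbitRel (Equiv.Perm (Fin n)) (ComplexConf n))

/-- The set of injective maps is open. -/
lemma complexConf_isOpen (n : ℕ) : IsOpen {f : Fin n → ℂ | Function.Injective f} := by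
  have h : {f : Fin n → ℂ | Function.Injective f} =
      ⋂ i : Fin n, ⋂ j : Fin n, {f : Fin n → ℂ | i ≠ j → f i ≠ f j} := by
    ext f
    simp only [Set.mem_ofPred_eq, Set.mem_iInter]
    exact ⟨fun h i j hij he => hij (h he), fun h i j he => by_contra fun hij => h i j hij he⟩
  rw [h]
  refine isOpen_iInter_of_finite fun i => isOpen_iInter_of_finite fun j => ?_
  by_cases hij : i = j
  · simp [hij]
  · simp only [ne_eq, hij, not_false_eq_true, forall_const]
    exact isOpen_ne_fun (continuous_apply i) (continuous_apply j)

lemma complexConf_smul_apply {n : ℕ} (σ : Equiv.Perm (Fin n)) (f : ComplexConf n) (i : Fin n) :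
    (σ • f).1 i = f.1 (σ⁻¹ i) := rfl

/-- The quotient map from ordered to unordered configurations is a quotient covering map. -/
lemma complexConf_isQuotientCoveringMap (n : ℕ) :
    IsQuotientCoveringMap
      (Quotient.mk (MulAction.orbitRel (Equiv.Perm (Fin n)) (ComplexConf n)))
      (Equiv.Perm (Fin n)) := by
  have : LocallyCompactSpace (ComplexConf n) := (complexConf_isOpen n).locallyCompactSpace
  have : ContinuousConstSMul (Equiv.Perm (Fin n)) (ComplexConf n) := ⟨fun σ => by
    refine Continuous.subtype_mk (continuous_pi fun i => ?_) _
    exact (continuous_apply (σ⁻¹ i)).comp continuous_subtype_val⟩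
  have : IsCancelSMul (Equiv.Perm (Fin n)) (ComplexConf n) := by
    rw [isCancelSMul_iff_eq_one_of_smul_eq]
    intro σ f h
    have h2 : σ⁻¹ = 1 := by
      ext i
      have h1 : f.1 (σ⁻¹ i) = f.1 i := by rw [← complexConf_smul_apply, h]
      rw [f.2 h1]; rfl
    exact inv_eq_one.mp h2
  exact isQuotientCoveringMap_quotientMk_of_properlyDiscontinuousSMul

/-- The ordered configuration space of `ℂ` is path connected: two configurations span a complex
affine line which meets the complement of the configuration space in finitely many points. -/
lemma complexConf_pathConnectedSpace (n : ℕ) (x : ComplexConf n) :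
    PathConnectedSpace (ComplexConf n) := by
  refine ⟨⟨x⟩, fun f g => ?_⟩
  let L : ℂ → Fin n → ℂ := fun t i => f.1 i + t * (g.1 i - f.1 i)
  have hL : Continuous L := by fun_prop
  let S : Set ℂ := ⋃ i : Fin n, ⋃ j : Fin n, {t : ℂ | i ≠ j ∧ L t i = L t j}
  have hS : S.Countable := by
    refine Set.countable_iUnion fun i => Set.countable_iUnion fun j => ?_
    refine Set.Subsingleton.countable ?_
    rintro s ⟨hij, hs⟩ t ⟨-, ht⟩
    have hne : f.1 i - f.1 j ≠ 0 := sub_ne_zero.mpr fun h => hij (f.2 h)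
    simp only [L] at hs ht
    by_contra hst
    have hst' : s - t ≠ 0 := sub_ne_zero.mpr hst
    have h1 : (s - t) * ((g.1 i - f.1 i) - (g.1 j - f.1 j)) = 0 := by
      linear_combination hs - ht
    have h2 := (mul_eq_zero.mp h1).resolve_left hst'
    exact hne (by linear_combination hs - s * h2)
  have hinj : ∀ t ∈ Sᶜ, Function.Injective (L t) := by
    intro t ht i j hij
    by_contra hne
    exact ht (Set.mem_iUnion.mpr ⟨i, Set.mem_iUnion.mpr ⟨j, hne, hij⟩⟩)
  have hL0 : L 0 = f.1 := by funext i; simp [L]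
  have hL1 : L 1 = g.1 := by funext i; simp [L]
  have h0 : (0 : ℂ) ∈ Sᶜ := by
    intro h
    obtain ⟨i, h⟩ := Set.mem_iUnion.mp h
    obtain ⟨j, hne, h⟩ := Set.mem_iUnion.mp h
    rw [hL0] at h
    exact hne (f.2 h)
  have h1 : (1 : ℂ) ∈ Sᶜ := by
    intro h
    obtain ⟨i, h⟩ := Set.mem_iUnion.mp h
    obtain ⟨j, hne, h⟩ := Set.mem_iUnion.mp h
    rw [hL1] at h
    exact hne (g.2 h)
  have hpc : IsPathConnected Sᶜ :=
    hS.isPathConnected_compl_of_one_lt_rank (by rw [Complex.rank_real_complex]; norm_num)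
  have hj := (hpc.joinedIn 0 h0 1 h1).joined_subtype
  let F : (Sᶜ : Set ℂ) → ComplexConf n := fun t => ⟨L t.1, hinj t.1 t.2⟩
  have hF : Continuous F := Continuous.subtype_mk (hL.comp continuous_subtype_val) _
  have hF0 : F ⟨0, h0⟩ = f := Subtype.ext hL0
  have hF1 : F ⟨1, h1⟩ = g := Subtype.ext hL1
  rw [← hF0, ← hF1]
  exact ⟨hj.somePath.map hF⟩

/-- There is a short exact sequence `1 → Bₙ(ℂ) → FBₙ(ℂ) → Sₙ → 1`:
a surjective homomorphism from the full braid group `FBₙ(ℂ) = π₁(Confₙ(ℂ)/Sₙ, q)` onto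
the symmetric group `Sₙ` whose kernel is isomorphic to the pure braid group
`Bₙ(ℂ) = π₁(Confₙ(ℂ), x)`. -/
theorem fullBraid_surjects_onto_symmetricGroup (n : ℕ) (hn : 1 ≤ n) (x : ComplexConf n) :
    ∃ φ : FundamentalGroup (ComplexUConf n)
        (Quotient.mk (MulAction.orbitRel (Equiv.Perm (Fin n)) (ComplexConf n)) x) →*
        Equiv.Perm (Fin n),
      Function.Surjective φ ∧
      Nonempty (φ.ker ≃* FundamentalGroup (ComplexConf n) x) := by
  have hp := complexConf_isQuotientCoveringMap n
  have := complexConf_pathConnectedSpace n x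
  let e : (Quotient.mk (MulAction.orbitRel (Equiv.Perm (Fin n)) (ComplexConf n))) ⁻¹'
    {Quotient.mk (MulAction.orbitRel (Equiv.Perm (Fin n)) (ComplexConf n)) x} := ⟨x, rfl⟩
  let ι : (Equiv.Perm (Fin n))ᵐᵒᵖ ≃* Equiv.Perm (Fin n) :=
    (MulEquiv.inv' (Equiv.Perm (Fin n))).symm
  let ψ := hp.fundamentalGroupToMulOpposite e
  refine ⟨ι.toMonoidHom.comp ψ,
    ι.surjective.comp (hp.fundamentalGroupToMulOpposite_surjective e), ?_⟩
  let m := FundamentalGroup.mapOfEq ⟨_, hp.continuous⟩ e.2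
  have hm : Function.Injective m := by
    intro a b hab
    apply hp.isCoveringMap.injective_path_homotopic_map
    have h := (FundamentalGroup.mapOfEq_apply ⟨_, hp.continuous⟩ e.2 a).symm.trans
      (hab.trans (FundamentalGroup.mapOfEq_apply ⟨_, hp.continuous⟩ e.2 b))
    simpa using h
  have hker : (ι.toMonoidHom.comp ψ).ker = m.range := by
    rw [← hp.ker_monodromyPerm e, ← hp.ker_fundamentalGroupToMulOpposite e]
    ext γ
    simp [MonoidHom.mem_ker, ψ]
  exact ⟨(MulEquiv.subgroupCongr hker).trans (MonoidHom.ofInjective hm).symm⟩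
end

section
/- Let S² be the unit sphere in ℝ³ and let n > 3. Let Conf_n(S²) = {f : Fin n → S² | f injective} be the ordered configuration space of n points on S², with basepoint x, and let Conf_3(S²) be the ordered configuration space of 3 points on S², with basepoint given by the first three coordinates of x. Then there exists a surjective group homomorphism from π₁(Conf_n(S²), x) onto π₁(Conf_3(S²)) whose kernel is isomorphic to the fundamental group of the configuration space of n − 3 points in ℂ ∖ {p₁, p₂}, where p₁ ≠ p₂ are two distinct points of ℂ; that is, there is a short exact sequence 1 → π₁(M²_{n−3}(ℂ)) → B_n(S²) → B_3(S²) → 1. -/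
/-- The 2-sphere: the unit sphere in `ℝ³`. -/
abbrev TwoSphere : Type := Metric.sphere (0 : EuclideanSpace ℝ (Fin 3)) 1

/-- The ordered configuration space of `n` points on the 2-sphere. -/
abbrev SphereConf (n : ℕ) : Type := {f : Fin n → TwoSphere // Function.Injective f}

/-- The configuration space of `m` points in `ℂ` avoiding the two points `p₁, p₂`. -/
abbrev ConfAvoidTwo (m : ℕ) (p₁ p₂ : ℂ) : Type :=
  {f : Fin m → ℂ // Function.Injective f ∧ ∀ i, f i ∉ ({p₁, p₂} : Set ℂ)}

section TopPart
variable {X B F : Type*} [TopologicalSpace X] [TopologicalSpace B] [TopologicalSpace F]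

theorem exists_lift_of_prod (r : C(X, B)) (s : C(X, F)) (h : X ≃ₜ B × F)
    (hh : ∀ z, h z = (r z, s z)) (x : X)
    (α : FundamentalGroup B (r x)) (β : FundamentalGroup F (s x)) :
    ∃ g : FundamentalGroup X x, FundamentalGroup.map r x g = α ∧
      FundamentalGroup.map s x g = β := by
  obtain ⟨a, rfl⟩ := Path.Homotopic.Quotient.mk_surjective α
  obtain ⟨b, rfl⟩ := Path.Homotopic.Quotient.mk_surjective β
  have hx : x = h.symm (r x, s x) := by rw [← hh, h.symm_apply_apply]
  have hr : ∀ p, r (h.symm p) = p.1 := fun p => by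
    have := hh (h.symm p); rw [h.apply_symm_apply] at this
    exact (congrArg Prod.fst this).symm
  have hs : ∀ p, s (h.symm p) = p.2 := fun p => by
    have := hh (h.symm p); rw [h.apply_symm_apply] at this
    exact (congrArg Prod.snd this).symm
  refine ⟨Path.Homotopic.Quotient.mk (((a.prod b).map h.symm.continuous).cast hx hx), ?_, ?_⟩
  · change Path.Homotopic.Quotient.map (Path.Homotopic.Quotient.mk _) r = _
    rw [← Path.Homotopic.Quotient.mk_map]
    congr 1
    ext t
    simp [hr]
  · change Path.Homotopic.Quotient.map (Path.Homotopic.Quotient.mk _) s = _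
    rw [← Path.Homotopic.Quotient.mk_map]
    congr 1
    ext t
    simp [hs]

theorem eq_of_map_eq_prod (r : C(X, B)) (s : C(X, F)) (h : X ≃ₜ B × F)
    (hh : ∀ z, h z = (r z, s z)) (x : X) (g g' : FundamentalGroup X x)
    (h1 : FundamentalGroup.map r x g = FundamentalGroup.map r x g')
    (h2 : FundamentalGroup.map s x g = FundamentalGroup.map s x g') : g = g' := by
  obtain ⟨a, rfl⟩ := Path.Homotopic.Quotient.mk_surjective g
  obtain ⟨b, rfl⟩ := Path.Homotopic.Quotient.mk_surjective g'
  have hx : x = h.symm (r x, s x) := by rw [← hh, h.symm_apply_apply]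
  have e1 : Path.Homotopic (a.map r.continuous) (b.map r.continuous) :=
    Path.Homotopic.Quotient.exact h1
  have e2 : Path.Homotopic (a.map s.continuous) (b.map s.continuous) :=
    Path.Homotopic.Quotient.exact h2
  have e3 : Path.Homotopic ((a.map r.continuous).prod (a.map s.continuous))
      ((b.map r.continuous).prod (b.map s.continuous)) :=
    Nonempty.map2 Path.Homotopic.prodHomotopy e1 e2
  have e4 := (e3.map (h.symm : C(B × F, X))).pathCast hx hx
  have key : ∀ c : Path x x, ((((c.map r.continuous).prod (c.map s.continuous)).map
      (h.symm : C(B × F, X)).continuous).cast hx hx) = c := by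
    intro c
    ext t
    simp [← hh]
  rw [key, key] at e4
  exact Path.Homotopic.Quotient.eq.2 e4

theorem map_surjective_of_prod (r : C(X, B)) (s : C(X, F)) (h : X ≃ₜ B × F)
    (hh : ∀ z, h z = (r z, s z)) (x : X) :
    Function.Surjective (FundamentalGroup.map r x) := fun α => by
  obtain ⟨g, hg, -⟩ := exists_lift_of_prod r s h hh x α 1
  exact ⟨g, hg⟩

theorem ker_equiv_of_prod (r : C(X, B)) (s : C(X, F)) (h : X ≃ₜ B × F)
    (hh : ∀ z, h z = (r z, s z)) (x : X) :
    Nonempty ((FundamentalGroup.map r x).ker ≃* FundamentalGroup F (s x)) := by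
  refine ⟨MulEquiv.ofBijective
    ((FundamentalGroup.map s x).comp (FundamentalGroup.map r x).ker.subtype) ⟨?_, ?_⟩⟩
  · intro g g' hgg
    apply Subtype.ext
    refine eq_of_map_eq_prod r s h hh x _ _ ?_ hgg
    rw [g.2, g'.2]
  · intro β
    obtain ⟨g, hg, hg'⟩ := exists_lift_of_prod r s h hh x 1 β
    exact ⟨⟨g, hg⟩, hg'⟩
end TopPart

section GeoPart
open scoped RealInnerProductSpace

abbrev E3 : Type := EuclideanSpace ℝ (Fin 3)

noncomputable def crossE (u d : E3) : E3 :=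
  !₂[u 1 * d 2 - u 2 * d 1, u 2 * d 0 - u 0 * d 2, u 0 * d 1 - u 1 * d 0]

theorem inner_E3 (a b : E3) : ⟪a, b⟫ = a 0 * b 0 + a 1 * b 1 + a 2 * b 2 := by
  simp [PiLp.inner_apply, Fin.sum_univ_three]; ring

noncomputable def stE (u q : E3) : E3 := (1 / (1 - ⟪u, q⟫)) • (q - ⟪u, q⟫ • u)

noncomputable def invE (u w : E3) : E3 :=
  (1 / (⟪w, w⟫ + 1)) • ((2 : ℝ) • w + (⟪w, w⟫ - 1) • u)

noncomputable def coordE (u d e : E3) : ℂ := ⟨⟪e, d⟫ / ⟪d, d⟫, ⟪e, crossE u d⟫ / ⟪d, d⟫⟩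

noncomputable def linE (u d : E3) (c : ℂ) : E3 := c.re • d + c.im • crossE u d

theorem inner_u_stE {u : E3} (hu : ⟪u, u⟫ = 1) (q : E3) : ⟪u, stE u q⟫ = 0 := by
  simp only [stE, inner_smul_right, inner_sub_right, hu]; ring

theorem inner_stE {u q : E3} (hu : ⟪u, u⟫ = 1) (hq : ⟪q, q⟫ = 1) (h : ⟪u, q⟫ ≠ 1) :
    ⟪stE u q, stE u q⟫ = (1 + ⟪u, q⟫) / (1 - ⟪u, q⟫) := by
  have h' : 1 - ⟪u, q⟫ ≠ 0 := sub_ne_zero.2 (Ne.symm h)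
  simp only [stE, inner_smul_right, inner_sub_right, inner_smul_left, inner_sub_left, hu, hq,
    real_inner_comm u q, conj_trivial]
  field_simp
  ring

theorem invE_stE {u q : E3} (hu : ⟪u, u⟫ = 1) (hq : ⟪q, q⟫ = 1) (h : ⟪u, q⟫ ≠ 1) :
    invE u (stE u q) = q := by
  have h' : 1 - ⟪u, q⟫ ≠ 0 := sub_ne_zero.2 (Ne.symm h)
  have h2 : (1 + ⟪u, q⟫) / (1 - ⟪u, q⟫) + 1 = 2 / (1 - ⟪u, q⟫) := by field_simp; ring
  rw [invE, inner_stE hu hq h, h2, stE]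
  ext i
  simp only [PiLp.smul_apply, PiLp.add_apply, PiLp.sub_apply, smul_eq_mul]
  field_simp
  ring

theorem inner_u_invE {u w : E3} (hu : ⟪u, u⟫ = 1) (hw : ⟪u, w⟫ = 0) :
    ⟪u, invE u w⟫ = (⟪w, w⟫ - 1) / (⟪w, w⟫ + 1) := by
  simp only [invE, inner_smul_right, inner_add_right, hu, hw]; ring

theorem inner_self_add_one_ne (w : E3) : ⟪w, w⟫ + 1 ≠ 0 := by
  have : 0 ≤ ⟪w, w⟫ := real_inner_self_nonneg
  positivity

theorem inner_u_invE_ne {u w : E3} (hu : ⟪u, u⟫ = 1) (hw : ⟪u, w⟫ = 0) :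
    ⟪u, invE u w⟫ ≠ 1 := by
  rw [inner_u_invE hu hw]
  intro h
  rw [div_eq_one_iff_eq (inner_self_add_one_ne w)] at h
  linarith

theorem stE_invE {u w : E3} (hu : ⟪u, u⟫ = 1) (hw : ⟪u, w⟫ = 0) : stE u (invE u w) = w := by
  have h0 := inner_self_add_one_ne w
  have h1 : 1 - (⟪w, w⟫ - 1) / (⟪w, w⟫ + 1) = 2 / (⟪w, w⟫ + 1) := by field_simp; ring
  rw [stE, inner_u_invE hu hw, h1, invE]
  ext i
  simp only [PiLp.smul_apply, PiLp.add_apply, PiLp.sub_apply, smul_eq_mul]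
  field_simp
  ring

theorem inner_invE {u w : E3} (hu : ⟪u, u⟫ = 1) (hw : ⟪u, w⟫ = 0) :
    ⟪invE u w, invE u w⟫ = 1 := by
  have h0 := inner_self_add_one_ne w
  simp only [invE, inner_smul_right, inner_add_right, inner_smul_left, inner_add_left, hu, hw,
    real_inner_comm u w, conj_trivial]
  field_simp
  ring

theorem inner_u_cross (u d : E3) : ⟪u, crossE u d⟫ = 0 := by
  simp [inner_E3, crossE]; ring

theorem inner_d_cross (u d : E3) : ⟪d, crossE u d⟫ = 0 := by
  simp [inner_E3, crossE]; ring

theorem inner_cross_cross {u d : E3} (hu : ⟪u, u⟫ = 1) (hd : ⟪u, d⟫ = 0) :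
    ⟪crossE u d, crossE u d⟫ = ⟪d, d⟫ := by
  simp only [inner_E3] at *
  simp [crossE]
  linear_combination (d 0 * d 0 + d 1 * d 1 + d 2 * d 2) * hu
    - (u 0 * d 0 + u 1 * d 1 + u 2 * d 2) * hd

theorem inner_u_linE {u d : E3} (hd : ⟪u, d⟫ = 0) (c : ℂ) : ⟪u, linE u d c⟫ = 0 := by
  simp [linE, inner_add_right, inner_smul_right, hd, inner_u_cross]

theorem coordE_linE {u d : E3} (hu : ⟪u, u⟫ = 1) (hd : ⟪u, d⟫ = 0) (h0 : ⟪d, d⟫ ≠ 0) (c : ℂ) :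
    coordE u d (linE u d c) = c := by
  have h1 := inner_d_cross u d
  have h2 : ⟪crossE u d, d⟫ = 0 := by rw [real_inner_comm]; exact h1
  apply Complex.ext
  · simp only [coordE, linE, inner_add_left, inner_smul_left, h2, conj_trivial]
    field_simp; ring
  · simp only [coordE, linE, inner_add_left, inner_smul_left, h1, conj_trivial,
      inner_cross_cross hu hd]
    field_simp; ring

theorem linE_coordE {u d e : E3} (hu : ⟪u, u⟫ = 1) (hd : ⟪u, d⟫ = 0) (he : ⟪u, e⟫ = 0)
    (h0 : ⟪d, d⟫ ≠ 0) : linE u d (coordE u d e) = e := by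
  have key : ∀ i, ⟪e, d⟫ * d i + ⟪e, crossE u d⟫ * crossE u d i = ⟪d, d⟫ * e i := by
    intro i
    simp only [inner_E3] at *
    fin_cases i
    · simp [crossE]
      linear_combination -((e 0 * d 0 + e 1 * d 1 + e 2 * d 2) * d 0
          - e 0 * (d 0 * d 0 + d 1 * d 1 + d 2 * d 2)) * hu
        - (e 0 * (u 0 * d 0 + u 1 * d 1 + u 2 * d 2)
          - (e 0 * d 0 + e 1 * d 1 + e 2 * d 2) * u 0) * hd
        + (d 0 * (u 0 * d 0 + u 1 * d 1 + u 2 * d 2)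
          - u 0 * (d 0 * d 0 + d 1 * d 1 + d 2 * d 2)) * he
    · simp [crossE]
      linear_combination -((e 0 * d 0 + e 1 * d 1 + e 2 * d 2) * d 1
          - e 1 * (d 0 * d 0 + d 1 * d 1 + d 2 * d 2)) * hu
        - (e 1 * (u 0 * d 0 + u 1 * d 1 + u 2 * d 2)
          - (e 0 * d 0 + e 1 * d 1 + e 2 * d 2) * u 1) * hd
        + (d 1 * (u 0 * d 0 + u 1 * d 1 + u 2 * d 2)
          - u 1 * (d 0 * d 0 + d 1 * d 1 + d 2 * d 2)) * he
    · simp [crossE]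
      linear_combination -((e 0 * d 0 + e 1 * d 1 + e 2 * d 2) * d 2
          - e 2 * (d 0 * d 0 + d 1 * d 1 + d 2 * d 2)) * hu
        - (e 2 * (u 0 * d 0 + u 1 * d 1 + u 2 * d 2)
          - (e 0 * d 0 + e 1 * d 1 + e 2 * d 2) * u 2) * hd
        + (d 2 * (u 0 * d 0 + u 1 * d 1 + u 2 * d 2)
          - u 2 * (d 0 * d 0 + d 1 * d 1 + d 2 * d 2)) * he
  ext i
  have := key i
  simp only [linE, coordE, PiLp.smul_apply, PiLp.add_apply, smul_eq_mul]
  field_simp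
  linarith

theorem sphere_inner_self (u : TwoSphere) : ⟪(u : E3), (u : E3)⟫ = 1 := by
  rw [real_inner_self_eq_norm_sq, norm_eq_of_mem_sphere]; norm_num

theorem sphere_inner_ne {u v : TwoSphere} (h : u ≠ v) : ⟪(u : E3), (v : E3)⟫ ≠ 1 := by
  intro hh
  apply h
  apply Subtype.ext
  exact (inner_eq_one_iff_of_norm_eq_one (norm_eq_of_mem_sphere u)
    (norm_eq_of_mem_sphere v)).1 hh

/-- The difference of the stereographic projections of `w` and `v` from `u`. -/
noncomputable def dirE (u v w : E3) : E3 := stE u w - stE u v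

theorem inner_u_dirE {u : E3} (hu : ⟪u, u⟫ = 1) (v w : E3) : ⟪u, dirE u v w⟫ = 0 := by
  simp [dirE, inner_sub_right, inner_u_stE hu]

theorem dirE_ne {u v w : TwoSphere} (huv : u ≠ v) (huw : u ≠ w) (hvw : v ≠ w) :
    ⟪dirE u v w, dirE (u : E3) v w⟫ ≠ 0 := by
  rw [Ne, inner_self_eq_zero]
  intro h
  apply hvw
  apply Subtype.ext
  rw [← invE_stE (sphere_inner_self u) (sphere_inner_self v) (sphere_inner_ne huv),
    ← invE_stE (sphere_inner_self u) (sphere_inner_self w) (sphere_inner_ne huw),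
    sub_eq_zero.1 h]

noncomputable def PhiE (u v w q : E3) : ℂ := coordE u (dirE u v w) (dirE u v q)

noncomputable def PsiE (u v w : E3) (c : ℂ) : E3 := invE u (stE u v + linE u (dirE u v w) c)

theorem inner_u_arg {u : E3} (hu : ⟪u, u⟫ = 1) (v w : E3) (c : ℂ) :
    ⟪u, stE u v + linE u (dirE u v w) c⟫ = 0 := by
  rw [inner_add_right, inner_u_stE hu, inner_u_linE (inner_u_dirE hu v w), add_zero]

noncomputable def Psi (u v w : TwoSphere) (c : ℂ) : TwoSphere :=
  ⟨PsiE u v w c, by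
    have h := inner_invE (sphere_inner_self u) (inner_u_arg (sphere_inner_self u) v w c)
    rw [real_inner_self_eq_norm_sq] at h
    rw [mem_sphere_zero_iff_norm]
    exact (pow_eq_one_iff_of_nonneg (norm_nonneg _) two_ne_zero).1 h⟩

theorem Psi_ne (u v w : TwoSphere) (c : ℂ) : u ≠ Psi u v w c := by
  intro h
  have h1 := inner_u_invE_ne (sphere_inner_self u) (inner_u_arg (sphere_inner_self u) v w c)
  apply h1
  have h2 : (u : E3) = PsiE u v w c := congrArg Subtype.val h
  change ⟪(u : E3), PsiE u v w c⟫ = 1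
  rw [← h2]; exact sphere_inner_self u

theorem Phi_Psi {u v w : TwoSphere} (huv : u ≠ v) (huw : u ≠ w) (hvw : v ≠ w) (c : ℂ) :
    PhiE u v w (Psi u v w c) = c := by
  have hu := sphere_inner_self u
  have h1 : dirE u v (Psi u v w c) = linE u (dirE u v w) c := by
    change stE u (PsiE u v w c) - stE u v = _
    rw [PsiE, stE_invE hu (inner_u_arg hu v w c), add_sub_cancel_left]
  rw [PhiE, h1, coordE_linE hu (inner_u_dirE hu v w) (dirE_ne huv huw hvw)]

theorem Psi_Phi {u v w q : TwoSphere} (huv : u ≠ v) (huw : u ≠ w) (hvw : v ≠ w) (huq : u ≠ q) :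
    Psi u v w (PhiE u v w q) = q := by
  have hu := sphere_inner_self u
  apply Subtype.ext
  change PsiE u v w (PhiE u v w q) = q
  rw [PsiE, PhiE, linE_coordE hu (inner_u_dirE hu v w) (inner_u_dirE hu v q)
    (dirE_ne huv huw hvw), dirE, add_sub_cancel,
    invE_stE hu (sphere_inner_self q) (sphere_inner_ne huq)]

theorem Phi_v (u v w : E3) : PhiE u v w v = 0 := by
  apply Complex.ext <;> simp [PhiE, coordE, dirE]

theorem Phi_w {u v w : TwoSphere} (huv : u ≠ v) (huw : u ≠ w) (hvw : v ≠ w) :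
    PhiE u v w w = 1 := by
  have := dirE_ne huv huw hvw
  apply Complex.ext <;> simp only [PhiE, coordE, inner_d_cross, div_self this] <;> simp

theorem continuous_crossE {Z : Type*} [TopologicalSpace Z] {a b : Z → E3} (ha : Continuous a)
    (hb : Continuous b) : Continuous fun z => crossE (a z) (b z) := by
  unfold crossE
  fun_prop

theorem continuous_stE {Z : Type*} [TopologicalSpace Z] {a b : Z → E3} (ha : Continuous a)
    (hb : Continuous b) (h : ∀ z, ⟪a z, b z⟫ ≠ 1) : Continuous fun z => stE (a z) (b z) := by
  unfold stE
  have hi : Continuous fun z => ⟪a z, b z⟫ := ha.inner hb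
  exact (continuous_const.div (continuous_const.sub hi)
    fun z => sub_ne_zero.2 (h z).symm).smul (hb.sub (hi.smul ha))

theorem continuous_invE {Z : Type*} [TopologicalSpace Z] {a b : Z → E3} (ha : Continuous a)
    (hb : Continuous b) : Continuous fun z => invE (a z) (b z) := by
  unfold invE
  have hi : Continuous fun z => ⟪b z, b z⟫ := hb.inner hb
  have h1 : Continuous fun z => (2 : ℝ) • b z := by fun_prop
  have h2 : Continuous fun z => (⟪b z, b z⟫ - 1) • a z := (hi.sub continuous_const).smul ha
  exact (continuous_const.div (hi.add continuous_const)
    fun z => inner_self_add_one_ne _).smul (h1.add h2)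

theorem continuous_Phi {Z : Type*} [TopologicalSpace Z] {u v w q : Z → TwoSphere}
    (hu : Continuous u) (hv : Continuous v) (hw : Continuous w) (hq : Continuous q)
    (huv : ∀ z, u z ≠ v z) (huw : ∀ z, u z ≠ w z) (hvw : ∀ z, v z ≠ w z)
    (huq : ∀ z, u z ≠ q z) : Continuous fun z => PhiE (u z) (v z) (w z) (q z) := by
  have cu : Continuous fun z => (u z : E3) := continuous_subtype_val.comp hu
  have sv := continuous_stE cu (continuous_subtype_val.comp hv) fun z => sphere_inner_ne (huv z)
  have sw := continuous_stE cu (continuous_subtype_val.comp hw) fun z => sphere_inner_ne (huw z)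
  have sq := continuous_stE cu (continuous_subtype_val.comp hq) fun z => sphere_inner_ne (huq z)
  have d1 : Continuous fun z => dirE (u z) (v z) (w z) := sw.sub sv
  have d2 : Continuous fun z => dirE (u z) (v z) (q z) := sq.sub sv
  have hd : ∀ z, ⟪dirE (u z : E3) (v z) (w z), dirE (u z : E3) (v z) (w z)⟫ ≠ 0 :=
    fun z => dirE_ne (huv z) (huw z) (hvw z)
  unfold PhiE coordE
  exact Complex.equivRealProdCLM.symm.continuous.comp
    (((d2.inner d1).div (d1.inner d1) hd).prodMk
      ((d2.inner (continuous_crossE cu d1)).div (d1.inner d1) hd))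

theorem continuous_Psi {Z : Type*} [TopologicalSpace Z] {u v w : Z → TwoSphere} {c : Z → ℂ}
    (hu : Continuous u) (hv : Continuous v) (hw : Continuous w) (hc : Continuous c)
    (huv : ∀ z, u z ≠ v z) (huw : ∀ z, u z ≠ w z) :
    Continuous fun z => Psi (u z) (v z) (w z) (c z) := by
  have cu : Continuous fun z => (u z : E3) := continuous_subtype_val.comp hu
  have sv := continuous_stE cu (continuous_subtype_val.comp hv) fun z => sphere_inner_ne (huv z)
  have sw := continuous_stE cu (continuous_subtype_val.comp hw) fun z => sphere_inner_ne (huw z)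
  have d1 : Continuous fun z => dirE (u z) (v z) (w z) := sw.sub sv
  refine Continuous.subtype_mk ?_ _
  unfold PsiE linE
  exact continuous_invE cu (sv.add (((Complex.continuous_re.comp hc).smul d1).add
    ((Complex.continuous_im.comp hc).smul (continuous_crossE cu d1))))

end GeoPart

section Final

theorem conf_ne {m : ℕ} (f : SphereConf m) {i j : Fin m} (h : (i : ℕ) ≠ j) : f.1 i ≠ f.1 j :=
  fun e => h (congrArg Fin.val (f.2 e))

theorem continuous_eval {m : ℕ} (i : Fin m) : Continuous fun f : SphereConf m => f.1 i :=
  (continuous_apply i).comp continuous_subtype_val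

/-- Restriction to the first three points. -/
def restr (n : ℕ) (hn : 3 < n) : C(SphereConf n, SphereConf 3) where
  toFun x := ⟨fun i => x.1 (Fin.castLE hn.le i), x.2.comp (Fin.castLE_injective hn.le)⟩
  continuous_toFun := Continuous.subtype_mk (continuous_pi fun _ => continuous_eval _) _

/-- The normalised coordinate of `q` with respect to the triple `g`. -/
noncomputable def cr (p₁ p₂ : ℂ) (g : SphereConf 3) (q : TwoSphere) : ℂ :=
  p₁ + PhiE (g.1 0) (g.1 1) (g.1 2) q * (p₂ - p₁)

/-- The inverse of the normalised coordinate. -/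
noncomputable def crInv (p₁ p₂ : ℂ) (g : SphereConf 3) (c : ℂ) : TwoSphere :=
  Psi (g.1 0) (g.1 1) (g.1 2) ((c - p₁) / (p₂ - p₁))

variable {p₁ p₂ : ℂ}

theorem g01 (g : SphereConf 3) : g.1 0 ≠ g.1 1 := conf_ne g (by decide)
theorem g02 (g : SphereConf 3) : g.1 0 ≠ g.1 2 := conf_ne g (by decide)
theorem g12 (g : SphereConf 3) : g.1 1 ≠ g.1 2 := conf_ne g (by decide)

theorem crInv_cr (hp : p₁ ≠ p₂) (g : SphereConf 3) {q : TwoSphere} (hq : g.1 0 ≠ q) :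
    crInv p₁ p₂ g (cr p₁ p₂ g q) = q := by
  rw [crInv, cr, add_sub_cancel_left, mul_div_cancel_right₀ _ (sub_ne_zero.2 hp.symm),
    Psi_Phi (g01 g) (g02 g) (g12 g) hq]

theorem cr_crInv (hp : p₁ ≠ p₂) (g : SphereConf 3) (c : ℂ) :
    cr p₁ p₂ g (crInv p₁ p₂ g c) = c := by
  rw [crInv, cr, Phi_Psi (g01 g) (g02 g) (g12 g), div_mul_cancel₀ _ (sub_ne_zero.2 hp.symm)]
  ring

theorem cr_one (g : SphereConf 3) : cr p₁ p₂ g (g.1 1) = p₁ := by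
  rw [cr, Phi_v]; ring

theorem cr_two (g : SphereConf 3) : cr p₁ p₂ g (g.1 2) = p₂ := by
  rw [cr, Phi_w (g01 g) (g02 g) (g12 g)]; ring

theorem cr_inj (hp : p₁ ≠ p₂) (g : SphereConf 3) {q q' : TwoSphere} (hq : g.1 0 ≠ q)
    (hq' : g.1 0 ≠ q') (h : cr p₁ p₂ g q = cr p₁ p₂ g q') : q = q' := by
  have e := crInv_cr hp g hq'
  rw [← crInv_cr hp g hq, h, e]

/-- The index of the `i`-th of the last `n - 3` points. -/
def tailIdx {n : ℕ} (i : Fin (n - 3)) : Fin n := ⟨i + 3, by omega⟩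

/-- The normalised coordinates of the last `n - 3` points. -/
noncomputable def tailMap (n : ℕ) (hn : 3 < n) (hp : p₁ ≠ p₂) :
    C(SphereConf n, ConfAvoidTwo (n - 3) p₁ p₂) where
  toFun x := ⟨fun i => cr p₁ p₂ (restr n hn x) (x.1 (tailIdx i)), by
    have h0 : ∀ (k : Fin 3) (i : Fin (n - 3)), (restr n hn x).1 k ≠ x.1 (tailIdx i) :=
      fun k i => conf_ne x (by simp [tailIdx]; omega)
    refine ⟨fun i j hij => ?_, fun i hi => ?_⟩
    · have := congrArg Fin.val (x.2 (cr_inj hp _ (h0 0 i) (h0 0 j) hij))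
      simp only [tailIdx] at this
      exact Fin.ext (by omega)
    · rcases hi with hi | hi
      · exact h0 1 i (cr_inj hp _ (g01 _) (h0 0 i) ((cr_one _).trans hi.symm))
      · exact h0 2 i (cr_inj hp _ (g02 _) (h0 0 i) ((cr_two _).trans hi.symm))⟩
  continuous_toFun := by
    refine Continuous.subtype_mk (continuous_pi fun i => ?_) _
    refine continuous_const.add (Continuous.mul ?_ continuous_const)
    exact continuous_Phi ((continuous_eval 0).comp (restr n hn).continuous)
      ((continuous_eval 1).comp (restr n hn).continuous)
      ((continuous_eval 2).comp (restr n hn).continuous) (continuous_eval (tailIdx i))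
      (fun _ => g01 _) (fun _ => g02 _) (fun _ => g12 _)
      (fun x => conf_ne x (by simp [tailIdx]))

/-- The inverse of the product decomposition, as a function. -/
noncomputable def glueFun (n : ℕ) (p₁ p₂ : ℂ) (y : SphereConf 3 × ConfAvoidTwo (n - 3) p₁ p₂)
    (k : Fin n) : TwoSphere :=
  if h : (k : ℕ) < 3 then y.1.1 ⟨k, h⟩ else crInv p₁ p₂ y.1 (y.2.1 ⟨k - 3, by omega⟩)

theorem head_ne_tail (hp : p₁ ≠ p₂) {m : ℕ} (y : SphereConf 3 × ConfAvoidTwo m p₁ p₂)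
    (k : Fin 3) (i : Fin m) : y.1.1 k ≠ crInv p₁ p₂ y.1 (y.2.1 i) := by
  intro h
  fin_cases k
  · exact Psi_ne _ _ _ _ h
  · refine y.2.2.2 i (Or.inl ?_)
    rw [← cr_crInv hp y.1 (y.2.1 i), ← h]
    exact cr_one _
  · refine y.2.2.2 i (Or.inr ?_)
    rw [← cr_crInv hp y.1 (y.2.1 i), ← h]
    exact cr_two _

theorem glueFun_injective (n : ℕ) (hp : p₁ ≠ p₂)
    (y : SphereConf 3 × ConfAvoidTwo (n - 3) p₁ p₂) :
    Function.Injective (glueFun n p₁ p₂ y) := by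
  intro k l h
  unfold glueFun at h
  split_ifs at h with h1 h2 h2
  · have := congrArg Fin.val (y.1.2 h)
    exact Fin.ext this
  · exact absurd h (head_ne_tail hp y _ _)
  · exact absurd h.symm (head_ne_tail hp y _ _)
  · have h3 := congrArg (cr p₁ p₂ y.1) h
    rw [cr_crInv hp, cr_crInv hp] at h3
    have := congrArg Fin.val (y.2.2.1 h3)
    simp only at this
    exact Fin.ext (by omega)

theorem continuous_glueFun (n : ℕ) (p₁ p₂ : ℂ) : Continuous (glueFun n p₁ p₂) := by
  refine continuous_pi fun k => ?_
  unfold glueFun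
  by_cases h : (k : ℕ) < 3
  · simp only [h, dif_pos]
    exact (continuous_eval _).comp continuous_fst
  · simp only [h, dif_neg, not_false_eq_true]
    refine continuous_Psi ((continuous_eval 0).comp continuous_fst)
      ((continuous_eval 1).comp continuous_fst) ((continuous_eval 2).comp continuous_fst) ?_
      (fun _ => g01 _) (fun _ => g02 _)
    refine Continuous.div_const (Continuous.sub ?_ continuous_const) _
    exact (continuous_apply _).comp (continuous_subtype_val.comp continuous_snd)

/-- The product decomposition of the configuration space of the sphere. -/
noncomputable def confHomeo (n : ℕ) (hn : 3 < n) (hp : p₁ ≠ p₂) :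
    SphereConf n ≃ₜ SphereConf 3 × ConfAvoidTwo (n - 3) p₁ p₂ where
  toFun x := (restr n hn x, tailMap n hn hp x)
  invFun y := ⟨glueFun n p₁ p₂ y, glueFun_injective n hp y⟩
  left_inv x := by
    apply Subtype.ext
    funext k
    change glueFun n p₁ p₂ _ k = x.1 k
    unfold glueFun
    split_ifs with h
    · rfl
    · have hk : tailIdx (⟨k - 3, by omega⟩ : Fin (n - 3)) = k :=
        Fin.ext (by simp only [tailIdx]; omega)
      change crInv p₁ p₂ (restr n hn x) (cr p₁ p₂ (restr n hn x) (x.1 (tailIdx _))) = _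
      rw [hk]
      exact crInv_cr hp _ (conf_ne x (by simp; omega))
  right_inv y := by
    have h1 : restr n hn ⟨glueFun n p₁ p₂ y, glueFun_injective n hp y⟩ = y.1 := by
      apply Subtype.ext
      funext k
      change glueFun n p₁ p₂ y (Fin.castLE hn.le k) = _
      unfold glueFun
      rw [dif_pos (by simp)]
      rfl
    refine Prod.ext h1 ?_
    apply Subtype.ext
    funext i
    change cr p₁ p₂ (restr n hn ⟨glueFun n p₁ p₂ y, _⟩) (glueFun n p₁ p₂ y (tailIdx i)) = _
    rw [h1]
    unfold glueFun
    rw [dif_neg (by simp [tailIdx]), cr_crInv hp]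
    rfl
  continuous_toFun := (restr n hn).continuous.prodMk (tailMap n hn hp).continuous
  continuous_invFun := Continuous.subtype_mk (continuous_glueFun n p₁ p₂) _

end Final

/-- For `n > 3` there is a short exact sequence
`1 → π₁(M²_{n-3}(ℂ)) → Bₙ(S²) → B₃(S²) → 1`: a surjective homomorphism from
`π₁(Conf_n(S²), x)` onto `π₁(Conf₃(S²))` (based at the first three coordinates of `x`)
whose kernel is isomorphic to the fundamental group of the configuration space of
`n - 3` points in `ℂ ∖ {p₁, p₂}`, for distinct points `p₁ ≠ p₂` of `ℂ`. -/
theorem sphere_pureBraid_ses (n : ℕ) (hn : 3 < n) (x : SphereConf n) :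
    ∃ φ : FundamentalGroup (SphereConf n) x →*
        FundamentalGroup (SphereConf 3)
          ⟨fun i => x.1 (Fin.castLE hn.le i), x.2.comp (Fin.castLE_injective hn.le)⟩,
      Function.Surjective φ ∧
      ∀ p₁ p₂ : ℂ, p₁ ≠ p₂ →
        ∃ y : ConfAvoidTwo (n - 3) p₁ p₂,
          Nonempty (φ.ker ≃* FundamentalGroup (ConfAvoidTwo (n - 3) p₁ p₂) y) := by
  refine ⟨FundamentalGroup.map (restr n hn) x, ?_, fun p₁ p₂ hp => ?_⟩
  · exact map_surjective_of_prod (restr n hn) (tailMap n hn (zero_ne_one (α := ℂ)))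
      (confHomeo n hn zero_ne_one) (fun _ => rfl) x
  · exact ⟨tailMap n hn hp x, ker_equiv_of_prod (restr n hn) (tailMap n hn hp)
      (confHomeo n hn hp) (fun _ => rfl) x⟩
end
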